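/- arXiv:1510.08212 — 3 statements merged into one kernel-verified Lean document; each statement's English description precedes it below -/
import Mathlib

section
/- For every p ≥ 4, every 2p-dimensional 2-step nilpotent symplectic Lie algebra over K (K = ℝ or ℂ) with characteristic sequence (2,2,1,…,1) is decomposable; more precisely, it is the direct product of a Lie algebra of dimension at most 7 with a nonzero abelian ideal. -/
/-- A symplectic form on a Lie algebra `g` over `K`: a `K`-bilinear form which is
alternating, nondegenerate and closed, i.e.
`θ ⁅X,Y⁆ Z + θ ⁅Y,Z⁆ X + θ ⁅Z,X⁆ Y = 0` for all `X Y Z`. -/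
def IsSymplecticForm (K : Type*) [RCLike K] (g : Type*) [LieRing g] [LieAlgebra K g]
    (θ : g → g → K) : Prop :=
  (∀ (a : K) (X Y Z : g), θ (a • X + Y) Z = a * θ X Z + θ Y Z) ∧
  (∀ (a : K) (X Y Z : g), θ X (a • Y + Z) = a * θ X Y + θ X Z) ∧
  (∀ X : g, θ X X = 0) ∧
  (∀ X : g, (∀ Y : g, θ X Y = 0) → X = 0) ∧
  (∀ X Y Z : g, θ ⁅X, Y⁆ Z + θ ⁅Y, Z⁆ X + θ ⁅Z, X⁆ Y = 0)
/-- A Lie algebra is 2-step nilpotent if `[[g,g],g] = 0` and `[g,g] ≠ 0`. -/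
def IsTwoStepNilpotent (g : Type*) [LieRing g] : Prop :=
  (∀ X Y Z : g, ⁅⁅X, Y⁆, Z⁆ = 0) ∧ ∃ X Y : g, ⁅X, Y⁆ ≠ 0
/-- A 2-step nilpotent Lie algebra has characteristic sequence `(2,…,2,1,…,1)` with exactly
`k` twos iff the maximum of `rank (ad X) = dim ⁅X, g⁆` over `X ∈ g \ [g,g]` equals `k`. -/
def HasCharSeqTwos (K : Type*) [RCLike K] (g : Type*) [LieRing g] [LieAlgebra K g]
    (k : ℕ) : Prop :=
  (∀ X : g, X ∉ LieAlgebra.derivedSeries K g 1 →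
      Module.finrank K ↥(LinearMap.range (LieAlgebra.ad K g X)) ≤ k) ∧
  ∃ X : g, X ∉ LieAlgebra.derivedSeries K g 1 ∧
      Module.finrank K ↥(LinearMap.range (LieAlgebra.ad K g X)) = k

section helpers
variable {K : Type*} [RCLike K] {g : Type*} [LieRing g] [LieAlgebra K g] [FiniteDimensional K g]

/-- Rank at most two: three brackets with the same element are dependent. -/
lemma aux_dep (hr : ∀ X : g, Module.finrank K ↥(LinearMap.range (LieAlgebra.ad K g X)) ≤ 2)
    (x u v w : g) : ¬ LinearIndependent K ![⁅x, u⁆, ⁅x, v⁆, ⁅x, w⁆] := by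
  intro h
  have h1 := finrank_span_eq_card h
  have h2 : Submodule.span K (Set.range ![⁅x, u⁆, ⁅x, v⁆, ⁅x, w⁆]) ≤
      LinearMap.range (LieAlgebra.ad K g x) := by
    rw [Submodule.span_le]
    rintro _ ⟨i, rfl⟩
    fin_cases i
    · exact ⟨u, rfl⟩
    · exact ⟨v, rfl⟩
    · exact ⟨w, rfl⟩
  have h3 := Submodule.finrank_mono h2
  have h4 := hr x
  simp at h1
  omega

lemma aux_indep3 {w1 w2 w3 : g} (h12 : LinearIndependent K ![w1, w2])
    (h3 : w3 ∉ Submodule.span K {w1, w2}) : LinearIndependent K ![w1, w2, w3] := by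
  rw [Fintype.linearIndependent_iff]
  intro c hc
  simp [Fin.sum_univ_three] at hc
  have hc2 : c 2 = 0 := by
    by_contra hne
    apply h3
    rw [Submodule.mem_span_pair]
    refine ⟨-(c 2)⁻¹ * c 0, -(c 2)⁻¹ * c 1, ?_⟩
    have : w3 = (c 2)⁻¹ • (c 2 • w3) := by rw [smul_smul, inv_mul_cancel₀ hne, one_smul]
    have e : c 2 • w3 = -(c 0 • w1 + c 1 • w2) := by
      rw [eq_neg_iff_add_eq_zero, add_comm]; exact hc
    rw [this, e]
    module
  have := LinearIndependent.pair_iff.1 h12 (c 0) (c 1) (by simpa [hc2] using hc)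
  intro i
  fin_cases i
  · exact this.1
  · exact this.2
  · exact hc2

lemma aux_finrank2 {x y : g} (h : LinearIndependent K ![x, y]) :
    Module.finrank K ↥(Submodule.span K {x, y}) = 2 := by
  have e : Set.range ![x, y] = {x, y} := by
    simp [Matrix.range_cons, Matrix.range_empty, Set.pair_comm]
  have h1 := finrank_span_eq_card h
  rw [e] at h1
  simpa using h1

lemma aux_poly (s d : K) : ∃ t : K, t ≠ 0 ∧ 1 + s * t + d * t ^ 2 ≠ 0 := by
  by_contra! h
  have h1 := h 1 one_ne_zero
  have h2 := h (-1) (by simp)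
  have h3 := h 2 (by simp)
  have : (3 : K) = 0 := by linear_combination (3 : K) * h1 + h2 - h3
  norm_num at this

lemma aux_mem (hr : ∀ X : g, Module.finrank K ↥(LinearMap.range (LieAlgebra.ad K g X)) ≤ 2)
    {x0 u v : g} (hi : LinearIndependent K ![⁅x0, u⁆, ⁅x0, v⁆]) (x k : g) (hk : ⁅x0, k⁆ = 0) :
    ⁅x, k⁆ ∈ Submodule.span K {⁅x0, u⁆, ⁅x0, v⁆} := by
  by_contra hn
  have h3 := aux_indep3 hi hn
  have hinj : LinearMap.ker (Fintype.linearCombination K ![⁅x0, u⁆, ⁅x0, v⁆, ⁅x, k⁆]) = ⊥ := by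
    rw [LinearMap.ker_eq_bot']
    intro c hc
    exact funext (Fintype.linearIndependent_iff.1 h3 c (by
      rwa [Fintype.linearCombination_apply] at hc))
  obtain ⟨f, hf⟩ := LinearMap.exists_leftInverse_of_injective _ hinj
  have e0 : f ⁅x0, u⁆ = Pi.single 0 1 := by
    have := LinearMap.congr_fun hf (Pi.single 0 1)
    simpa [Fintype.linearCombination_apply, Fin.sum_univ_three] using this
  have e1 : f ⁅x0, v⁆ = Pi.single 1 1 := by
    have := LinearMap.congr_fun hf (Pi.single 1 1)
    simpa [Fintype.linearCombination_apply, Fin.sum_univ_three] using this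
  have e2 : f ⁅x, k⁆ = Pi.single 2 1 := by
    have := LinearMap.congr_fun hf (Pi.single 2 1)
    simpa [Fintype.linearCombination_apply, Fin.sum_univ_three] using this
  set p := f ⁅x, u⁆ with hp
  set q := f ⁅x, v⁆ with hq
  obtain ⟨t, ht, hdet⟩ := aux_poly (K := K) (p 0 + q 1) (p 0 * q 1 - p 1 * q 0)
  apply aux_dep hr (x0 + t • x) u v k
  rw [Fintype.linearIndependent_iff]
  intro c hc
  simp only [Fin.sum_univ_three, add_lie, smul_lie, hk, Matrix.cons_val_zero,
    Matrix.cons_val_one, Matrix.cons_val] at hc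
  have hfc := congrArg f hc
  simp only [map_add, map_smul, e0, e1, e2, ← hp, ← hq, map_zero] at hfc
  have f0 := congrFun hfc 0
  have f1 := congrFun hfc 1
  have f2 := congrFun hfc 2
  simp at f0 f1 f2
  have c0 : c 0 = 0 := by
    have : c 0 * (1 + (p 0 + q 1) * t + (p 0 * q 1 - p 1 * q 0) * t ^ 2) = 0 := by
      linear_combination (1 + t * q 1) * f0 - t * q 0 * f1
    exact (mul_eq_zero.1 this).resolve_right hdet
  have c1 : c 1 = 0 := by
    have : c 1 * (1 + (p 0 + q 1) * t + (p 0 * q 1 - p 1 * q 0) * t ^ 2) = 0 := by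
      linear_combination (1 + t * p 0) * f1 - t * p 1 * f0
    exact (mul_eq_zero.1 this).resolve_right hdet
  have c2 : c 2 = 0 := by simpa [c0, c1, ht] using f2
  intro i
  fin_cases i
  · exact c0
  · exact c1
  · exact c2

lemma aux_line (hr : ∀ X : g, Module.finrank K ↥(LinearMap.range (LieAlgebra.ad K g X)) ≤ 2)
    {x0 : g} {W : Submodule K g}
    (hW : ∀ x k : g, ⁅x0, k⁆ = 0 → ⁅x, k⁆ ∈ W) (a b : g) (hab : ⁅a, b⁆ ∉ W)
    (k : g) (hk : ⁅x0, k⁆ = 0) : ∃ l : K, ⁅a, k⁆ = l • ⁅a, x0⁆ := by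
  by_cases hz : ⁅a, x0⁆ = 0
  · exfalso
    apply hab
    have h1 : ⁅b, a⁆ ∈ W := hW b a (by rw [← lie_skew, hz, neg_zero])
    rw [← lie_skew]
    exact W.neg_mem h1
  by_contra! hn
  apply aux_dep hr a x0 k b
  apply aux_indep3
  · rw [LinearIndependent.pair_iff' hz]
    intro l hl
    exact hn l hl.symm
  · intro hm
    apply hab
    refine Submodule.span_le.2 ?_ hm
    rintro y (rfl | rfl)
    · exact hW _ _ (lie_self x0)
    · exact hW _ _ hk

/-- Final assembly from the dimension inequality. -/
lemma aux_final (D Z : Submodule K g) (hD : ∀ x y : g, ⁅x, y⁆ ∈ D)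
    (hZ : ∀ z ∈ Z, ∀ x : g, ⁅x, z⁆ = 0) (hDZ : D ≤ Z)
    (hdim : Module.finrank K g + Module.finrank K D ≤ 7 + Module.finrank K Z)
    (h8 : 8 ≤ Module.finrank K g) :
    ∃ I J : LieIdeal K g, I ⊓ J = ⊥ ∧ I ⊔ J = ⊤ ∧
      Module.finrank K ↥I ≤ 7 ∧ J ≠ ⊥ ∧ (∀ x ∈ J, ∀ y ∈ J, ⁅x, y⁆ = (0 : g)) := by
  obtain ⟨C, hC⟩ := D.exists_isCompl
  obtain ⟨E, hE⟩ := Z.exists_isCompl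
  have hJ : D ⊔ (C ⊓ Z) = Z := by
    rw [← sup_inf_assoc_of_le C hDZ, hC.sup_eq_top, top_inf_eq]
  let I : LieIdeal K g := { (D ⊔ E) with
    lie_mem := fun {x m} _ => (le_sup_left : D ≤ D ⊔ E) (hD x m) }
  let J : LieIdeal K g := { (C ⊓ Z) with
    lie_mem := fun {x m} hm => by
      have : ⁅x, m⁆ = 0 := hZ m hm.2 x
      change ⁅x, m⁆ ∈ C ⊓ Z
      rw [this]; exact zero_mem _ }
  have hIs : I.toSubmodule = D ⊔ E := rfl
  have hJs : J.toSubmodule = C ⊓ Z := rfl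
  have hsup : I ⊔ J = ⊤ := by
    rw [← LieSubmodule.toSubmodule_inj, LieSubmodule.sup_toSubmodule, hIs, hJs,
      LieSubmodule.top_toSubmodule, sup_right_comm, hJ, hE.sup_eq_top]
  have hI7 : Module.finrank K ↥I ≤ 7 := by
    have h1 : Module.finrank K ↥(D ⊔ E) ≤ Module.finrank K D + Module.finrank K E :=
      Submodule.finrank_add_le_finrank_add_finrank D E
    have h2 := Submodule.finrank_add_eq_of_isCompl hE
    change Module.finrank K ↥(D ⊔ E) ≤ 7
    omega
  refine ⟨I, J, ?_, hsup, hI7, ?_, ?_⟩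
  · rw [← LieSubmodule.toSubmodule_inj, LieSubmodule.inf_toSubmodule, hIs, hJs,
      LieSubmodule.bot_toSubmodule, eq_bot_iff]
    rintro j ⟨h1, h2, h3⟩
    obtain ⟨d, hd, e, he, rfl⟩ := Submodule.mem_sup.1 h1
    have he0 : e ∈ Z ⊓ E := ⟨by simpa using Z.sub_mem h3 (hDZ hd), he⟩
    rw [hE.inf_eq_bot, Submodule.mem_bot] at he0
    subst he0
    have hd0 : d ∈ D ⊓ C := ⟨hd, by simpa using h2⟩
    rw [hC.inf_eq_bot, Submodule.mem_bot] at hd0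
    simp [hd0]
  · intro hb
    rw [hb, sup_bot_eq] at hsup
    have : Module.finrank K ↥(I.toSubmodule) ≤ 7 := hI7
    rw [hsup, LieSubmodule.top_toSubmodule, finrank_top] at this
    omega
  · intro x _ y hy
    exact hZ y hy.2 x

/-- Case where the derived algebra is larger than `[x0, g]`. -/
lemma aux_case3 (hr : ∀ X : g, Module.finrank K ↥(LinearMap.range (LieAlgebra.ad K g X)) ≤ 2)
    {x0 u v : g} (hi : LinearIndependent K ![⁅x0, u⁆, ⁅x0, v⁆])
    (Z : Submodule K g) (hZ : ∀ z, z ∈ Z ↔ ∀ x : g, ⁅x, z⁆ = 0)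
    (W : Submodule K g) (hWd : W = Submodule.span K {⁅x0, u⁆, ⁅x0, v⁆})
    (hW0 : ∀ x, ⁅x0, x⁆ ∈ W) (a b : g) (hab : ⁅a, b⁆ ∉ W) :
    ∀ y : g, ∃ α β γ : K, y - α • a - β • b - γ • x0 ∈ Z := by
  have hW : ∀ x k : g, ⁅x0, k⁆ = 0 → ⁅x, k⁆ ∈ W := fun x k hk => by
    rw [hWd]; exact aux_mem hr hi x k hk
  have hW' : ∀ x k : g, ⁅x0, k⁆ = 0 → ⁅k, x⁆ ∈ W := fun x k hk => by
    rw [← lie_skew]; exact W.neg_mem (hW x k hk)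
  have hba : ⁅b, a⁆ ∉ W := fun h => hab (by rw [← lie_skew]; exact W.neg_mem h)
  -- independence of `[x0,a]` and `[x0,b]`
  have hind : LinearIndependent K ![⁅x0, a⁆, ⁅x0, b⁆] := by
    rw [LinearIndependent.pair_iff]
    intro s t hst
    have hk : ⁅x0, s • a + t • b⁆ = 0 := by simpa using hst
    constructor
    · by_contra hs
      have := hW' b _ hk
      simp only [add_lie, smul_lie, lie_self, smul_zero, add_zero] at this
      exact hab ((W.smul_mem_iff hs).1 this)
    · by_contra hs
      have := hW' a _ hk
      simp only [add_lie, smul_lie, lie_self, smul_zero, zero_add] at this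
      exact hba ((W.smul_mem_iff hs).1 this)
  have hspan : Submodule.span K {⁅x0, a⁆, ⁅x0, b⁆} = W := by
    apply Submodule.eq_of_le_of_finrank_le
    · rw [Submodule.span_le]
      rintro y (rfl | rfl) <;> exact hW0 _
    · rw [hWd, aux_finrank2 hind, aux_finrank2 hi]
  have hxa : ∀ s t : K, s • ⁅a, x0⁆ = t • ⁅b, x0⁆ → s = 0 ∧ t = 0 := by
    intro s t h
    have := LinearIndependent.pair_iff.1 hind s (-t) (by
      rw [← lie_skew x0 a, ← lie_skew x0 b, smul_neg, smul_neg, h]; module)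
    exact ⟨this.1, by simpa using this.2⟩
  have key : ∀ k : g, ⁅x0, k⁆ = 0 → ∃ γ : K, k - γ • x0 ∈ Z := by
    intro k hk
    obtain ⟨l, hl⟩ := aux_line hr hW a b hab k hk
    obtain ⟨m, hm⟩ := aux_line hr hW b a hba k hk
    obtain ⟨n, hn⟩ := aux_line hr hW (a + b) b (by simpa using hab) k hk
    rw [add_lie, add_lie, hl, hm] at hn
    obtain ⟨h1, h2⟩ := hxa (l - n) (n - m) (by
      have : l • ⁅a, x0⁆ + m • ⁅b, x0⁆ - n • (⁅a, x0⁆ + ⁅b, x0⁆) = 0 := sub_eq_zero.2 hn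
      rw [← sub_eq_zero, ← this]; module)
    have hln : l = n := sub_eq_zero.1 h1
    have hnm : n = m := sub_eq_zero.1 h2
    subst hln
    subst hnm
    refine ⟨l, (hZ _).2 ?_⟩
    set h := k - l • x0 with hh
    have ha : ⁅a, h⁆ = 0 := by rw [hh, lie_sub, lie_smul, hl, sub_self]
    have hb : ⁅b, h⁆ = 0 := by rw [hh, lie_sub, lie_smul, hm, sub_self]
    have hx : ⁅x0, h⁆ = 0 := by rw [hh, lie_sub, lie_smul, hk, lie_self, smul_zero, sub_self]
    have hkk : ∀ k' : g, ⁅x0, k'⁆ = 0 → ⁅k', h⁆ = 0 := by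
      intro k' hk'
      have hk'' : ⁅k', x0⁆ = 0 := by rw [← lie_skew, hk', neg_zero]
      obtain ⟨s, hs⟩ := aux_line hr hW (a + k') b (by
        rw [add_lie]
        exact fun hmem => hab ((W.add_mem_iff_left (hW' b k' hk')).1 hmem)) h hx
      obtain ⟨t, ht⟩ := aux_line hr hW (b + k') a (by
        rw [add_lie]
        exact fun hmem => hba ((W.add_mem_iff_left (hW' a k' hk')).1 hmem)) h hx
      rw [add_lie, add_lie, ha, hk'', zero_add, add_zero] at hs
      rw [add_lie, add_lie, hb, hk'', zero_add, add_zero] at ht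
      have := (hxa s t (hs.symm.trans ht)).1
      rw [hs, this, zero_smul]
    intro y
    obtain ⟨α, β, hαβ⟩ := Submodule.mem_span_pair.1 (hspan ▸ hW0 y :
      ⁅x0, y⁆ ∈ Submodule.span K {⁅x0, a⁆, ⁅x0, b⁆})
    have hy := hkk (y - α • a - β • b) (by
      rw [lie_sub, lie_sub, lie_smul, lie_smul, ← hαβ]; abel)
    rw [sub_lie, sub_lie, smul_lie, smul_lie, ha, hb] at hy
    simpa using hy
  intro y
  obtain ⟨α, β, hαβ⟩ := Submodule.mem_span_pair.1 (hspan ▸ hW0 y :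
    ⁅x0, y⁆ ∈ Submodule.span K {⁅x0, a⁆, ⁅x0, b⁆})
  obtain ⟨γ, hγ⟩ := key (y - α • a - β • b) (by
    rw [lie_sub, lie_sub, lie_smul, lie_smul, ← hαβ]; abel)
  exact ⟨α, β, γ, hγ⟩

/-- Case where the derived algebra is two-dimensional. -/
lemma aux_case2 (B : LinearMap.BilinForm K g) (halt : ∀ x, B x x = 0)
    (hnd : ∀ x, (∀ y, B x y = 0) → x = 0)
    (hcl : ∀ x y z : g, B ⁅x, y⁆ z + B ⁅y, z⁆ x + B ⁅z, x⁆ y = 0)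
    (Z : Submodule K g) (hZ : ∀ z, z ∈ Z ↔ ∀ x : g, ⁅x, z⁆ = 0)
    (D : Submodule K g) (hD : ∀ x y : g, ⁅x, y⁆ ∈ D) (hD2 : Module.finrank K D = 2) :
    Module.finrank K g ≤ 5 + Module.finrank K Z := by
  let U : Submodule K g := B.orthogonal D
  have hU : ∀ z, z ∈ U ↔ ∀ d ∈ D, B d z = 0 := fun z => Iff.rfl
  have hUdim : Module.finrank K U = Module.finrank K g - Module.finrank K D := by
    have hk : LinearMap.ker B = ⊥ := by
      rw [LinearMap.ker_eq_bot']
      intro x hx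
      exact hnd x fun y => by rw [hx]; rfl
    have := LinearMap.BilinForm.finrank_add_finrank_orthogonal' (B := B) D
    rw [hk, inf_bot_eq, finrank_bot] at this
    change _ + Module.finrank K U = _ at this
    omega
  have hle : Module.finrank K D ≤ Module.finrank K g := Submodule.finrank_le D
  obtain ⟨C, hC⟩ := U.exists_isCompl
  have hC2 : Module.finrank K C = 2 := by
    have := Submodule.finrank_add_eq_of_isCompl hC
    omega
  let bC := Module.finBasisOfFinrankEq K C hC2
  have hdec : ∀ y : g, ∃ α β : K, y - α • (bC 0 : g) - β • (bC 1 : g) ∈ U := by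
    intro y
    obtain ⟨z, hz, c, hc, rfl⟩ := Submodule.mem_sup.1 (hC.sup_eq_top ▸ Submodule.mem_top :
      y ∈ U ⊔ C)
    refine ⟨bC.repr ⟨c, hc⟩ 0, bC.repr ⟨c, hc⟩ 1, ?_⟩
    have := congrArg Subtype.val (bC.sum_repr ⟨c, hc⟩)
    simp only [Fin.sum_univ_two, Submodule.coe_add, Submodule.coe_smul] at this
    have e : z + c - bC.repr ⟨c, hc⟩ 0 • (bC 0 : g) - bC.repr ⟨c, hc⟩ 1 • (bC 1 : g) = z := by
      rw [sub_sub, this]; abel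
    rw [e]; exact hz
  generalize (bC 0 : g) = a at hdec
  generalize (bC 1 : g) = b at hdec
  -- the trilinear form
  let T : g → g → g →ₗ[K] K := fun x y => B.flip y ∘ₗ (-(LieAlgebra.ad K g x : g →ₗ[K] g))
  have hT : ∀ x y z, T x y z = B ⁅z, x⁆ y := by
    intro x y z
    rw [← lie_skew z x, map_neg]
    simp only [T, LinearMap.comp_apply, LinearMap.neg_apply, LieAlgebra.ad_apply, map_neg]
    rfl
  let F : U →ₗ[K] (Fin 3 → K) := LinearMap.pi ![T a a ∘ₗ U.subtype, T a b ∘ₗ U.subtype,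
    T b b ∘ₗ U.subtype]
  have hker : (LinearMap.ker F).map U.subtype ≤ Z := by
    rintro _ ⟨z, hz, rfl⟩
    have hz0 := congrFun (LinearMap.mem_ker.1 hz) 0
    have hz1 := congrFun (LinearMap.mem_ker.1 hz) 1
    have hz2 := congrFun (LinearMap.mem_ker.1 hz) 2
    simp [F, hT] at hz0 hz1 hz2
    obtain ⟨z, hzU⟩ := z
    simp only [Submodule.subtype_apply] at *
    have hsym : ∀ x y, B ⁅z, x⁆ y = B ⁅z, y⁆ x := by
      intro x y
      have h1 := hcl z x y
      have h2 : B ⁅x, y⁆ z = 0 := (hU z).1 hzU _ (hD x y)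
      rw [h2, ← lie_skew y z, map_neg, LinearMap.neg_apply] at h1
      linear_combination h1
    have hu : ∀ x, ∀ w ∈ U, B ⁅z, x⁆ w = 0 := fun x w hw => (hU w).1 hw _ (hD z x)
    have hred : ∀ x y, (B ⁅z, x⁆ a = 0) → B ⁅z, x⁆ b = 0 → B ⁅z, x⁆ y = 0 := by
      intro x y h1 h2
      obtain ⟨α, β, h⟩ := hdec y
      have := hu x _ h
      simpa [h1, h2] using this
    have hba : B ⁅z, b⁆ a = 0 := by rw [hsym]; exact hz1
    have hza : ∀ y, B ⁅z, a⁆ y = 0 := fun y => hred a y hz0 hz1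
    have hzb : ∀ y, B ⁅z, b⁆ y = 0 := fun y => hred b y hba hz2
    rw [hZ]
    intro x
    rw [← lie_skew, neg_eq_zero]
    apply hnd
    intro y
    apply hred
    · rw [hsym]; exact hza x
    · rw [hsym]; exact hzb x
  have h1 := Submodule.finrank_mono hker
  rw [Submodule.finrank_map_subtype_eq] at h1
  have h2 := LinearMap.finrank_range_add_finrank_ker F
  have h3 : Module.finrank K (LinearMap.range F) ≤ 3 := by
    simpa using Submodule.finrank_le (LinearMap.range F)
  omega

end helpers

/-- For every `p ≥ 4`, every `2p`-dimensional 2-step nilpotent symplectic Lie algebra over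
`K` with characteristic sequence `(2,2,1,…,1)` is decomposable; more precisely it is the
direct product of a Lie algebra of dimension at most 7 with a nonzero abelian ideal. -/
theorem decomposable_of_charSeqTwo_symplectic
    (K : Type*) [RCLike K] (g : Type*) [LieRing g] [LieAlgebra K g] [FiniteDimensional K g]
    (p : ℕ) (hp : 4 ≤ p)
    (h2 : IsTwoStepNilpotent g) (hdim : Module.finrank K g = 2 * p)
    (hc : HasCharSeqTwos K g 2)
    (θ : g → g → K) (hθ : IsSymplecticForm K g θ) :
    ∃ I J : LieIdeal K g, I ⊓ J = ⊥ ∧ I ⊔ J = ⊤ ∧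
      Module.finrank K ↥I ≤ 7 ∧ J ≠ ⊥ ∧ (∀ x ∈ J, ∀ y ∈ J, ⁅x, y⁆ = (0 : g)) := by
  obtain ⟨hnil, -⟩ := h2
  obtain ⟨hle, x0, -, hx0⟩ := hc
  obtain ⟨hadd1, hadd2, halt, hnd, hcl⟩ := hθ
  have hr : ∀ X : g, Module.finrank K ↥(LinearMap.range (LieAlgebra.ad K g X)) ≤ 2 := by
    intro X
    by_cases hX : X ∈ LieAlgebra.derivedSeries K g 1
    · have hX' : X ∈ LieAlgebra.center K g := by
        have hle : LieAlgebra.derivedSeries K g 1 ≤ LieAlgebra.center K g := by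
          rw [LieAlgebra.derivedSeries_def, LieAlgebra.derivedSeriesOfIdeal_succ,
            LieAlgebra.derivedSeriesOfIdeal_zero, LieSubmodule.lie_le_iff]
          intro x _ y _
          rw [LieModule.mem_maxTrivSubmodule]
          intro z
          rw [← lie_skew, hnil, neg_zero]
        exact hle hX
      have : LieAlgebra.ad K g X = 0 := by
        ext y
        rw [LieModule.mem_maxTrivSubmodule] at hX'
        rw [LieAlgebra.ad_apply, ← lie_skew, hX' y]; simp
      rw [this]
      have h0 : LinearMap.range (0 : Module.End K g) = ⊥ := LinearMap.range_zero
      rw [h0, finrank_bot]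
      omega
    · exact hle X hX
  let Z : Submodule K g := (LieAlgebra.center K g).toSubmodule
  have hZ : ∀ z, z ∈ Z ↔ ∀ x : g, ⁅x, z⁆ = 0 := fun z =>
    LieModule.mem_maxTrivSubmodule (R := K) (L := g) (M := g) z
  have hbr : ∀ x y : g, ⁅x, y⁆ ∈ Z := fun x y => (hZ _).2 fun z => by
    rw [← lie_skew, hnil, neg_zero]
  obtain ⟨u, v, hi, hrange⟩ : ∃ u v : g, LinearIndependent K ![⁅x0, u⁆, ⁅x0, v⁆] ∧
      LinearMap.range (LieAlgebra.ad K g x0) = Submodule.span K {⁅x0, u⁆, ⁅x0, v⁆} := by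
    let bW := Module.finBasisOfFinrankEq K _ hx0
    obtain ⟨u, hu⟩ := (bW 0).2
    obtain ⟨v, hv⟩ := (bW 1).2
    rw [LieAlgebra.ad_apply] at hu hv
    have hli := bW.linearIndependent.map' (Submodule.subtype _) (Submodule.ker_subtype _)
    have hli' : LinearIndependent K ![⁅x0, u⁆, ⁅x0, v⁆] := by
      have e : ![⁅x0, u⁆, ⁅x0, v⁆] = (Submodule.subtype _) ∘ bW := by
        ext i
        fin_cases i
        · exact hu
        · exact hv
      rw [e]
      exact hli
    refine ⟨u, v, hli', ?_⟩
    symm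
    apply Submodule.eq_of_le_of_finrank_le
    · rw [Submodule.span_le]
      rintro y (rfl | rfl)
      · exact ⟨u, rfl⟩
      · exact ⟨v, rfl⟩
    · rw [aux_finrank2 hli', hx0]
  by_cases hall : ∀ x y : g, ⁅x, y⁆ ∈ LinearMap.range (LieAlgebra.ad K g x0)
  · let B : LinearMap.BilinForm K g := LinearMap.mk₂ K θ
      (fun x y z => by simpa using hadd1 1 x y z)
      (fun c x y => by
        have h0 : θ 0 y = 0 := by
          have := hadd1 (-1) x x y
          simpa using this
        simpa [h0] using hadd1 c x 0 y)
      (fun x y z => by simpa using hadd2 1 x y z)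
      (fun c x y => by
        have h0 : θ x 0 = 0 := by
          have := hadd2 (-1) x y y
          simpa using this
        simpa [h0] using hadd2 c x y 0)
    have h5 := aux_case2 B halt hnd hcl Z hZ _ hall hx0
    apply aux_final _ Z hall (fun z hz => (hZ z).1 hz) _ (by omega) (by omega)
    rintro _ ⟨y, rfl⟩
    exact hbr x0 y
  · push Not at hall
    obtain ⟨a, b, hab⟩ := hall
    have h3 := aux_case3 hr hi Z hZ _ hrange (fun x => ⟨x, rfl⟩) a b hab
    let S : Submodule K g := Submodule.span K (Set.range ![a, b, x0])
    let D : Submodule K g := Submodule.span K (Set.range ![⁅a, b⁆, ⁅a, x0⁆, ⁅b, x0⁆])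
    have hS : Module.finrank K S ≤ 3 := by
      have h := finrank_range_le_card (R := K) ![a, b, x0]
      rw [Fintype.card_fin] at h
      exact h
    have hD : Module.finrank K D ≤ 3 := by
      have h := finrank_range_le_card (R := K) ![⁅a, b⁆, ⁅a, x0⁆, ⁅b, x0⁆]
      rw [Fintype.card_fin] at h
      exact h
    have hSZ : S ⊔ Z = ⊤ := by
      rw [eq_top_iff]
      intro y _
      obtain ⟨α, β, γ, h⟩ := h3 y
      have e : y = (α • a + β • b + γ • x0) + (y - α • a - β • b - γ • x0) := by abel
      rw [e]
      refine Submodule.add_mem_sup ?_ h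
      have ha : a ∈ S := Submodule.subset_span ⟨0, rfl⟩
      have hb : b ∈ S := Submodule.subset_span ⟨1, rfl⟩
      have hx : x0 ∈ S := Submodule.subset_span ⟨2, rfl⟩
      exact S.add_mem (S.add_mem (S.smul_mem _ ha) (S.smul_mem _ hb)) (S.smul_mem _ hx)
    have hn : Module.finrank K g ≤ 3 + Module.finrank K Z := by
      have := Submodule.finrank_add_le_finrank_add_finrank S Z
      rw [hSZ, finrank_top] at this
      omega
    have hab' : ⁅a, b⁆ ∈ D := Submodule.subset_span ⟨0, rfl⟩
    have hax : ⁅a, x0⁆ ∈ D := Submodule.subset_span ⟨1, rfl⟩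
    have hbx : ⁅b, x0⁆ ∈ D := Submodule.subset_span ⟨2, rfl⟩
    have hDall : ∀ x y : g, ⁅x, y⁆ ∈ D := by
      intro x y
      obtain ⟨α, β, γ, h⟩ := h3 x
      obtain ⟨α', β', γ', h'⟩ := h3 y
      set z := x - α • a - β • b - γ • x0 with hz
      set z' := y - α' • a - β' • b - γ' • x0 with hz'
      have ex : x = α • a + β • b + γ • x0 + z := by rw [hz]; abel
      have ey : y = α' • a + β' • b + γ' • x0 + z' := by rw [hz']; abel
      have c1 : ∀ w : g, ⁅w, z'⁆ = 0 := (hZ _).1 h'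
      have c2 : ∀ w : g, ⁅z, w⁆ = 0 := fun w => by rw [← lie_skew, (hZ _).1 h, neg_zero]
      have : ⁅x, y⁆ = (α * β' - β * α') • ⁅a, b⁆ + (α * γ' - γ * α') • ⁅a, x0⁆
          + (β * γ' - γ * β') • ⁅b, x0⁆ := by
        rw [ex, ey]
        simp only [add_lie, lie_add, smul_lie, lie_smul, c1, c2, lie_self]
        rw [← lie_skew b a, ← lie_skew x0 a, ← lie_skew x0 b]
        module
      rw [this]
      exact D.add_mem (D.add_mem (D.smul_mem _ hab') (D.smul_mem _ hax)) (D.smul_mem _ hbx)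
    apply aux_final D Z hDall (fun z hz => (hZ z).1 hz) _ (by omega) (by omega)
    rw [Submodule.span_le]
    rintro _ ⟨i, rfl⟩
    fin_cases i
    · exact hbr _ _
    · exact hbr _ _
    · exact hbr _ _
end

section
/- Let g be a 2-step nilpotent symplectic Lie algebra over K (K = ℝ or ℂ) with characteristic sequence (2,…,2,1,…,1) containing exactly k twos. If dim g > k(k+5)/2, then g is decomposable: it is the direct product of a Lie algebra of dimension k(k+5)/2 with a nonzero abelian ideal. -/
open Module

section GenericTools

variable {K : Type*} [Field K]

/-- A small perturbation of a linearly independent family stays independent. -/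
theorem finite_not_li {V : Type*} [AddCommGroup V] [Module K V]
    {n : ℕ} (u v : Fin n → V) (hu : LinearIndependent K u) :
    {t : K | ¬ LinearIndependent K (fun i => u i + t • v i)}.Finite := by
  classical
  obtain ⟨φ, hφ⟩ := LinearMap.exists_leftInverse_of_injective
    (Fintype.linearCombination K u) (by
      rw [LinearMap.ker_eq_bot]
      exact hu.fintypeLinearCombination_injective)
  have hφu : ∀ i, φ (u i) = Pi.single i 1 := by
    intro i
    have := congrArg (fun f => f (Pi.single i 1)) hφ
    simpa [Fintype.linearCombination_apply_single] using this
  let M : Matrix (Fin n) (Fin n) K := fun i j => φ (v i) j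
  let p : Polynomial K := (1 + (Polynomial.X : Polynomial K) • M.map Polynomial.C).det
  have hev : ∀ t, p.eval t = (1 + t • M).det := by
    intro t
    have := RingHom.map_det (Polynomial.evalRingHom t)
      (1 + (Polynomial.X : Polynomial K) • M.map Polynomial.C)
    simp only [Polynomial.coe_evalRingHom] at this
    rw [show p.eval t = _ from this]
    congr 1
    ext i j
    by_cases hij : i = j <;> simp [hij] <;> ring
  have hp : p ≠ 0 := by
    intro h
    have := hev 0
    simp [h] at this
  refine (Polynomial.finite_setOfPred_isRoot hp).subset ?_
  intro t ht
  by_contra hroot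
  apply ht
  have hdet : (1 + t • M).det ≠ 0 := by
    rw [← hev]; exact hroot
  have := Matrix.linearIndependent_rows_of_det_ne_zero hdet
  apply LinearIndependent.of_comp φ
  have e : (⇑φ ∘ fun i => u i + t • v i) = fun i => (1 + t • M) i := by
    ext i j
    simp only [Function.comp, map_add, map_smul, hφu, Pi.add_apply, Pi.smul_apply,
      Matrix.add_apply, Matrix.one_apply, Pi.single_apply, M]
    simp only [eq_comm]
    rfl
  rw [e]
  exact this

theorem finrank_map_add {V W : Type*} [AddCommGroup V] [Module K V] [FiniteDimensional K V]
    [AddCommGroup W] [Module K W] (f : V →ₗ[K] W) (E : Submodule K V) :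
    finrank K (E.map f) + finrank K (E ⊓ LinearMap.ker f : Submodule K V) = finrank K E := by
  have h := LinearMap.finrank_range_add_finrank_ker (f.domRestrict E)
  rw [LinearMap.range_domRestrict, LinearMap.ker_domRestrict] at h
  have h2 : finrank K (Submodule.comap E.subtype (LinearMap.ker f))
      = finrank K (E ⊓ LinearMap.ker f : Submodule K V) := by
    rw [← Submodule.map_comap_subtype]
    exact (LinearEquiv.finrank_eq (Submodule.equivMapOfInjective E.subtype
      E.injective_subtype _))
  omega

theorem finrank_ge_of_li {W : Type*} [AddCommGroup W] [Module K W]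
    [FiniteDimensional K W] {n : ℕ} {w : Fin n → W} (hw : LinearIndependent K w)
    (P : Submodule K W) (h : ∀ i, w i ∈ P) : n ≤ finrank K P := by
  have h1 := finrank_span_eq_card hw
  rw [Fintype.card_fin] at h1
  rw [← h1]
  apply Submodule.finrank_mono
  rw [Submodule.span_le]
  rintro _ ⟨i, rfl⟩
  exact h i

theorem exists_lift {V W : Type*} [AddCommGroup V] [Module K V]
    [AddCommGroup W] [Module K W] [FiniteDimensional K W] (f : V →ₗ[K] W) (E : Submodule K V) :
    ∃ c : Fin (finrank K (E.map f)) → V, (∀ i, c i ∈ E) ∧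
      LinearIndependent K (fun i => f (c i)) := by
  let B := Module.finBasis K (E.map f)
  have : ∀ i, ∃ c ∈ E, f c = B i := fun i => (B i).2
  choose c hc hc' using this
  refine ⟨c, hc, ?_⟩
  have := B.linearIndependent.map' (E.map f).subtype (Submodule.ker_subtype _)
  have e : (fun i => f (c i)) = ((E.map f).subtype ∘ B) := by
    ext i
    simp [hc']
  rw [e]
  exact this

/-- Nonempty, and cofinite on lines. -/
def Gen (K : Type*) [Field K] {V : Type*} [AddCommGroup V] [Module K V] (P : V → Prop) : Prop :=
  (∃ x, P x) ∧ ∀ x y, P x → {t : K | ¬ P (x + t • y)}.Finite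

theorem Gen.and {V : Type*} [AddCommGroup V] [Module K V] [Infinite K] {P Q : V → Prop}
    (hP : Gen K P) (hQ : Gen K Q) : Gen K (fun x => P x ∧ Q x) := by
  refine ⟨?_, ?_⟩
  · obtain ⟨x, hx⟩ := hP.1
    obtain ⟨y, hy⟩ := hQ.1
    have h1 := hP.2 x (y - x) hx
    have h2 := (hQ.2 y (x - y) hy).image (fun t => 1 - t)
    obtain ⟨t, ht⟩ := (h1.union h2).exists_notMem
    refine ⟨x + t • (y - x), ?_, ?_⟩
    · by_contra h
      exact ht (Or.inl h)
    · by_contra h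
      apply ht
      refine Or.inr ⟨1 - t, ?_, by ring⟩
      have : y + (1 - t) • (x - y) = x + t • (y - x) := by module
      simpa [this] using h
  · intro x y h
    refine ((hP.2 x y h.1).union (hQ.2 x y h.2)).subset ?_
    intro t ht
    simp only [Set.mem_ofPred_eq, Set.mem_union] at ht ⊢
    tauto

theorem gen_linear {V : Type*} [AddCommGroup V] [Module K V] {W : Type*} [AddCommGroup W]
    [Module K W] (ψ : V →ₗ[K] W) (x : V) (h : ψ x ≠ 0) : Gen K (fun x => ψ x ≠ 0) := by
  refine ⟨⟨x, h⟩, ?_⟩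
  intro x y hx
  apply Set.Subsingleton.finite
  intro t ht t' ht'
  simp only [Set.mem_ofPred_eq, not_not, map_add, map_smul] at ht ht'
  have h1 : (t - t') • ψ y = 0 := by
    rw [sub_smul, sub_eq_zero]
    exact add_left_cancel (ht.trans ht'.symm)
  rcases smul_eq_zero.1 h1 with h2 | h2
  · exact sub_eq_zero.1 h2
  · simp [h2] at ht
    exact absurd ht hx

theorem gen_quad {V : Type*} [AddCommGroup V] [Module K V] (q : V →ₗ[K] V →ₗ[K] K)
    (x : V) (h : q x x ≠ 0) : Gen K (fun x => q x x ≠ 0) := by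
  refine ⟨⟨x, h⟩, ?_⟩
  intro x y hx
  let p : Polynomial K := Polynomial.C (q x x) + Polynomial.C (q x y + q y x) * Polynomial.X +
    Polynomial.C (q y y) * Polynomial.X ^ 2
  have hev : ∀ t, p.eval t = q (x + t • y) (x + t • y) := by
    intro t
    simp [p]
    ring
  have hp : p ≠ 0 := by
    intro h
    have := hev 0
    simp [h] at this
    exact hx this.symm
  refine (Polynomial.finite_setOfPred_isRoot hp).subset ?_
  intro t ht
  simp only [Set.mem_ofPred_eq, not_not] at ht
  exact (hev t).trans ht

variable {V V1 W : Type*} [AddCommGroup V] [Module K V] [AddCommGroup V1] [Module K V1]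
  [AddCommGroup W] [Module K W] [FiniteDimensional K W]

theorem finite_rank_lt (Φ : V →ₗ[K] V1 →ₗ[K] W) (E : Submodule K V1) (x y : V) :
    {t : K | finrank K (E.map (Φ (x + t • y))) < finrank K (E.map (Φ x))}.Finite := by
  obtain ⟨c, hc, hli⟩ := exists_lift (Φ x) E
  refine (finite_not_li _ (fun i => Φ y (c i)) hli).subset ?_
  intro t ht hli'
  have := finrank_ge_of_li hli' (E.map (Φ (x + t • y)))
    (fun i => ⟨c i, hc i, by simp⟩)
  simp only [Set.mem_ofPred_eq] at ht
  omega

theorem gen_rank (Φ : V →ₗ[K] V1 →ₗ[K] W) (E : Submodule K V1) (ρ : ℕ)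
    (hle : ∀ x, finrank K (E.map (Φ x)) ≤ ρ) (hex : ∃ x, finrank K (E.map (Φ x)) = ρ) :
    Gen K (fun x => finrank K (E.map (Φ x)) = ρ) := by
  refine ⟨hex, ?_⟩
  intro x y hx
  refine (finite_rank_lt Φ E x y).subset ?_
  intro t ht
  simp only [Set.mem_ofPred_eq] at ht hx ⊢
  have := hle (x + t • y)
  omega

theorem exists_max_rank (Φ : V →ₗ[K] V1 →ₗ[K] W) (E : Submodule K V1) :
    ∃ ρ, (∀ x, finrank K (E.map (Φ x)) ≤ ρ) ∧ ∃ x, finrank K (E.map (Φ x)) = ρ := by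
  have hb : BddAbove (Set.range fun x => finrank K (E.map (Φ x))) :=
    ⟨finrank K W, by rintro _ ⟨x, rfl⟩; exact Submodule.finrank_le _⟩
  have hn : (Set.range fun x => finrank K (E.map (Φ x))).Nonempty := ⟨_, 0, rfl⟩
  refine ⟨_, fun x => le_csSup hb ⟨x, rfl⟩, ?_⟩
  obtain ⟨x, hx⟩ := Nat.sSup_mem hn hb
  exact ⟨x, hx⟩

theorem rank_le_of_gen [Infinite K] (Φ : V →ₗ[K] V1 →ₗ[K] W) (E : Submodule K V1) (s : ℕ)
    {P : V → Prop} (hP : Gen K P) (h : ∀ x, P x → finrank K (E.map (Φ x)) ≤ s) (x : V) :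
    finrank K (E.map (Φ x)) ≤ s := by
  obtain ⟨ρ, h1, h2⟩ := exists_max_rank Φ E
  obtain ⟨y, hy1, hy2⟩ := ((gen_rank Φ E ρ h1 h2).and hP).1
  have := h y hy2
  have := h1 x
  omega

theorem tangent [Infinite K] (Φ : V →ₗ[K] V1 →ₗ[K] W) (E : Submodule K V1) (ρ : ℕ)
    (hle : ∀ x, finrank K (E.map (Φ x)) ≤ ρ) (x : V) (hx : finrank K (E.map (Φ x)) = ρ)
    (y : V) (a : V1) (ha : a ∈ E) (hxa : Φ x a = 0) : Φ y a ∈ E.map (Φ x) := by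
  by_contra hn
  obtain ⟨c, hc, hli⟩ := exists_lift (Φ x) E
  have hli2 : LinearIndependent K (Fin.snoc (fun i => Φ x (c i)) (Φ y a) : Fin _ → W) := by
    rw [linearIndependent_finSnoc]
    refine ⟨hli, fun h => hn ?_⟩
    refine (Submodule.span_le.2 ?_) h
    rintro _ ⟨i, rfl⟩
    exact ⟨c i, hc i, rfl⟩
  have hfin := finite_not_li _ (Fin.snoc (fun i => Φ y (c i)) 0 : Fin _ → W) hli2
  obtain ⟨t, ht⟩ := (hfin.union (Set.finite_singleton (0 : K))).exists_notMem
  have ht0 : t ≠ 0 := fun h => ht (Or.inr h)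
  have hli3 := not_not.1 (fun h => ht (Or.inl h))
  have := finrank_ge_of_li hli3 (E.map (Φ (x + t • y))) (by
    intro i
    refine Fin.lastCases ?_ (fun i => ?_) i
    · refine ⟨t⁻¹ • a, E.smul_mem _ ha, ?_⟩
      simp [hxa, ht0]
    · exact ⟨c i, hc i, by simp⟩)
  have := hle (x + t • y)
  omega

end GenericTools

/-- Dimension of the span of an alternating map all of whose partial maps have rank at most r. -/
theorem finrank_span_alt {K : Type*} [Field K] [Infinite K] {V : Type*} [AddCommGroup V]
    [Module K V] (r : ℕ) : ∀ (W : Type*) [AddCommGroup W] [Module K W] [FiniteDimensional K W]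
    (c : V →ₗ[K] V →ₗ[K] W) (_ : ∀ x, c x x = 0)
    (_ : ∀ x, finrank K ((⊤ : Submodule K V).map (c x)) ≤ r),
    2 * finrank K (Submodule.span K {w | ∃ x y, w = c x y}) ≤ r * (r + 1) := by
  induction r with
  | zero =>
    intro W _ _ _ c hc hr
    have : Submodule.span K {w | ∃ x y, w = c x y} = ⊥ := by
      rw [Submodule.span_eq_bot]
      rintro _ ⟨x, y, rfl⟩
      have h1 := hr x
      rw [Nat.le_zero, Submodule.finrank_eq_zero] at h1
      have : c x y ∈ (⊤ : Submodule K V).map (c x) := ⟨y, trivial, rfl⟩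
      simpa [h1] using this
    rw [this]
    simp
  | succ r ih =>
    intro W _ _ _ c hc hr
    by_cases hz : ∀ x y, c x y = 0
    · have : Submodule.span K {w | ∃ x y, w = c x y} = ⊥ := by
        rw [Submodule.span_eq_bot]
        rintro _ ⟨x, y, rfl⟩
        exact hz x y
      rw [this]
      simp
    push Not at hz
    obtain ⟨x, y0, hxy⟩ := hz
    let S := (⊤ : Submodule K V).map (c x)
    let c' : V →ₗ[K] V →ₗ[K] (W ⧸ S) := c.compr₂ S.mkQ
    have hskew : ∀ u v, c u v = - c v u := by
      intro u v
      have := hc (u + v)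
      simp only [map_add, LinearMap.add_apply, hc] at this
      rw [zero_add, add_zero] at this
      exact eq_neg_of_add_eq_zero_right this
    have h' : ∀ w, finrank K ((⊤ : Submodule K V).map (c' w)) ≤ r := by
      apply rank_le_of_gen c' ⊤ r (gen_linear (c x) y0 hxy)
      intro w hw
      have e : (⊤ : Submodule K V).map (c' w) = ((⊤ : Submodule K V).map (c w)).map S.mkQ := by
        rw [← Submodule.map_comp]
        rfl
      rw [e]
      have h1 := finrank_map_add S.mkQ ((⊤ : Submodule K V).map (c w))
      have h2 := hr w
      have h3 : 0 < finrank K ((⊤ : Submodule K V).map (c w) ⊓ LinearMap.ker S.mkQ :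
          Submodule K W) := by
        rw [Nat.pos_iff_ne_zero, Ne, Submodule.finrank_eq_zero]
        intro h0
        have : c x w ∈ ((⊤ : Submodule K V).map (c w) ⊓ LinearMap.ker S.mkQ :
          Submodule K W) := by
          refine ⟨⟨-x, trivial, ?_⟩, ?_⟩
          · rw [map_neg, hskew w x, neg_neg]
          · rw [Submodule.ker_mkQ]
            exact ⟨w, trivial, rfl⟩
        rw [h0] at this
        exact hw (by simpa using this)
      omega
    have h1 := ih (W ⧸ S) c' (fun x => by simp [c', hc]) h'
    have h2 := finrank_map_add S.mkQ (Submodule.span K {w | ∃ x y, w = c x y})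
    have h3 : (Submodule.span K {w | ∃ x y, w = c x y}).map S.mkQ
        = Submodule.span K {w | ∃ x y, w = c' x y} := by
      rw [Submodule.map_span]
      congr 1
      ext w
      constructor
      · rintro ⟨_, ⟨x, y, rfl⟩, rfl⟩
        exact ⟨x, y, rfl⟩
      · rintro ⟨x, y, rfl⟩
        exact ⟨_, ⟨x, y, rfl⟩, rfl⟩
    have h4 : finrank K (Submodule.span K {w | ∃ x y, w = c x y} ⊓ LinearMap.ker S.mkQ :
        Submodule K W) ≤ r + 1 := by
      refine le_trans (Submodule.finrank_mono (t := S) ?_) (hr x)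
      rw [Submodule.ker_mkQ]
      exact inf_le_right
    rw [h3] at h2
    nlinarith

/-- The bilinear data extracted from a symplectic Lie algebra. -/
structure SympData {K : Type*} [Field K] {V : Type*} [AddCommGroup V] [Module K V]
    (b : V →ₗ[K] V →ₗ[K] V) (θ : LinearMap.BilinForm K V) : Prop where
  hb : ∀ x, b x x = 0
  ha : ∀ x, θ x x = 0
  hnd : ∀ x, (∀ y, θ x y = 0) → x = 0
  hcl : ∀ x y z, θ (b x y) z + θ (b y z) x + θ (b z x) y = 0

section Estimates

variable {K : Type*} [Field K] [CharZero K] {V : Type*} [AddCommGroup V] [Module K V]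
  {b : V →ₗ[K] V →ₗ[K] V} {θ : LinearMap.BilinForm K V}


theorem SympData.skew (h : SympData b θ) (x y : V) : b x y = - b y x := by
  have := h.hb (x + y)
  simp only [map_add, LinearMap.add_apply, h.hb] at this
  rw [zero_add, add_zero] at this
  exact eq_neg_of_add_eq_zero_right this

theorem SympData.askew (h : SympData b θ) (x y : V) : θ x y = - θ y x := by
  have := h.ha (x + y)
  simp only [map_add, LinearMap.add_apply, h.ha] at this
  rw [zero_add, add_zero] at this
  exact eq_neg_of_add_eq_zero_right this

theorem SympData.mem_ker (h : SympData b θ) (z : V) (hz : ∀ y, b y z = 0) :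
    z ∈ LinearMap.ker b := by
  rw [LinearMap.mem_ker]
  ext y
  rw [h.skew, hz]
  simp

theorem SympData.mem_ker' (h : SympData b θ) (z : V) (hz : z ∈ LinearMap.ker b) (y : V) :
    b y z = 0 := by
  rw [LinearMap.mem_ker] at hz
  rw [h.skew, hz]
  simp

/-- Closedness rewritten as a defect of symmetry. -/
theorem SympData.cl (h : SympData b θ) (x y z : V) :
    θ (b y z) x = θ (b x z) y - θ (b x y) z := by
  have h1 := h.hcl x y z
  rw [h.skew z x] at h1
  simp only [map_neg, LinearMap.neg_apply] at h1
  linear_combination h1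

variable [FiniteDimensional K V]

theorem SympData.finrank_orth (h : SympData b θ) (W : Submodule K V) :
    finrank K (θ.orthogonal W) + finrank K W = finrank K V := by
  have hn : θ.Nondegenerate := by
    refine ⟨h.hnd, fun x hx => h.hnd x (fun y => ?_)⟩
    rw [h.askew, hx, neg_zero]
  have h1 := LinearMap.BilinForm.finrank_orthogonal hn W
  have h2 := Submodule.finrank_le W
  omega

theorem inf_ker_lt (P : Submodule K V) (ψ : V →ₗ[K] K) (v : V) (hv : v ∈ P) (h : ψ v ≠ 0) :
    finrank K (P ⊓ LinearMap.ker ψ : Submodule K V) + 1 ≤ finrank K P := by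
  apply Submodule.finrank_lt_finrank_of_lt
  refine lt_of_le_of_ne inf_le_left (fun he => h ?_)
  rw [← he] at hv
  exact hv.2

theorem le_inf_ker (P : Submodule K V) (ψ : V →ₗ[K] K) :
    finrank K P ≤ finrank K (P ⊓ LinearMap.ker ψ : Submodule K V) + 1 := by
  have h1 := finrank_map_add ψ P
  have h2 := Submodule.finrank_le (P.map ψ)
  rw [finrank_self] at h2
  omega

/-- Spaces of symmetric forms. -/
theorem SympData.sym_bound (h : SympData b θ) (s : ℕ) : ∀ E : Submodule K V,
    (∀ u ∈ E, ∀ x y, θ (b x y) u = 0) → (∀ y, finrank K (E.map (b y)) ≤ s) →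
    2 * finrank K E ≤ s * (s + 1) + 2 * finrank K (LinearMap.ker b) := by
  induction s with
  | zero =>
    intro E _ hE
    have : E ≤ LinearMap.ker b := by
      intro u hu
      apply h.mem_ker
      intro y
      have h1 := hE y
      rw [Nat.le_zero, Submodule.finrank_eq_zero] at h1
      have : b y u ∈ E.map (b y) := ⟨u, hu, rfl⟩
      simpa [h1] using this
    have := Submodule.finrank_mono this
    omega
  | succ s ih =>
    intro E hU hE
    have hsym : ∀ u ∈ E, ∀ x y, θ (b x u) y = θ (b y u) x := by
      intro u hu x y
      rw [h.cl x y u, hU u hu, sub_zero]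
    by_cases hm : ∃ y, finrank K (E.map (b y)) = s + 1
    swap
    · have := ih E hU (fun y => by
        have h1 := hE y
        have h2 : finrank K (E.map (b y)) ≠ s + 1 := fun h => hm ⟨y, h⟩
        omega)
      nlinarith
    have hgen1 := gen_rank b E (s + 1) hE hm
    have hex : ∃ u ∈ E, ∃ x, θ (b x u) x ≠ 0 := by
      by_contra hcon
      push Not at hcon
      obtain ⟨y, hy⟩ := hm
      have : E.map (b y) = ⊥ := by
        rw [eq_bot_iff]
        rintro _ ⟨u, hu, rfl⟩
        rw [Submodule.mem_bot]
        apply h.hnd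
        intro x
        have h1 := hcon u hu (x + y)
        simp only [map_add, LinearMap.add_apply, hcon u hu, hsym u hu x y] at h1
        have h2 : (2 : K) * θ (b y u) x = 0 := by linear_combination h1
        simpa using h2
      rw [this] at hy
      simp at hy
    obtain ⟨u, hu, x, hx⟩ := hex
    have hgen2 := gen_quad (θ.comp (b.flip u) LinearMap.id) x (by simpa using hx)
    obtain ⟨y, hy1, hy2⟩ := (hgen1.and hgen2).1
    have hy2 : θ (b y u) y ≠ 0 := by simpa using hy2
    have key : ∀ w, finrank K ((E ⊓ LinearMap.ker (b y)).map (b w)) ≤ s := by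
      intro w
      have hle : (E ⊓ LinearMap.ker (b y)).map (b w) ≤
          E.map (b y) ⊓ LinearMap.ker (θ.flip y) := by
        rintro _ ⟨a, ⟨haE, hay⟩, rfl⟩
        rw [SetLike.mem_coe, LinearMap.mem_ker] at hay
        refine ⟨tangent b E (s + 1) hE y hy1 w a haE hay, ?_⟩
        simp [hsym a haE w y, hay]
      have h1 := Submodule.finrank_mono hle
      have h2 := inf_ker_lt (E.map (b y)) (θ.flip y) (b y u) ⟨u, hu, rfl⟩ (by simpa using hy2)
      omega
    have h1 := ih (E ⊓ LinearMap.ker (b y)) (fun u hu => hU u hu.1) key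
    have h2 := finrank_map_add (b y) E
    have h3 := hE y
    nlinarith

/-- The chain argument cutting the values down to `T`. -/
theorem SympData.chain_bound (h : SympData b θ) (k : ℕ)
    (hk : ∀ x, finrank K ((⊤ : Submodule K V).map (b x)) ≤ k)
    (T Z' T' : Submodule K V)
    (hT : ∀ v, (∀ x, finrank K ((⊤ : Submodule K V).map (b x)) = k →
      v ∈ (⊤ : Submodule K V).map (b x)) → v ∈ T)
    (hT2 : ∀ x, finrank K ((⊤ : Submodule K V).map (b x)) = k →
      T' ≤ (⊤ : Submodule K V).map (b x))
    (hZ' : ∀ z, (∀ y, b y z ∈ T) → z ∈ Z') (i : ℕ) :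
    ∀ (P G : Submodule K V), (∀ y, G.map (b y) ≤ P) → T' ≤ P →
      finrank K P ≤ finrank K T' + i →
      2 * finrank K G + i ≤ 2 * finrank K (G ⊓ Z' : Submodule K V)
        + i * (2 * finrank K T' + i) := by
  have base : ∀ (P G : Submodule K V), (∀ y, G.map (b y) ≤ P) → P ≤ T →
      G ⊓ Z' = G := by
    intro P G hG hP
    apply inf_eq_left.2
    intro z hz
    exact hZ' z (fun y => hP (hG y ⟨z, hz, rfl⟩))
  induction i with
  | zero =>
    intro P G hG hTP hc
    have hP : T' = P := Submodule.eq_of_le_of_finrank_le hTP (by omega)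
    rw [base P G hG (by
      intro v hv
      exact hT v (fun x hx => hT2 x hx (hP ▸ hv)))]
    simp
  | succ i ih =>
    intro P G hG hTP hc
    by_cases hP : P ≤ T
    · rw [base P G hG hP]
      nlinarith
    · obtain ⟨v, hvP, hvT⟩ := Set.not_subset.1 hP
      have : ∃ x, finrank K ((⊤ : Submodule K V).map (b x)) = k ∧
          v ∉ (⊤ : Submodule K V).map (b x) := by
        by_contra hcon
        push Not at hcon
        exact hvT (hT v hcon)
      obtain ⟨x, hx, hvx⟩ := this
      set S := (⊤ : Submodule K V).map (b x) with hS
      have hlt : finrank K (P ⊓ S : Submodule K V) < finrank K P := by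
        apply Submodule.finrank_lt_finrank_of_lt
        refine lt_of_le_of_ne inf_le_left (fun he => hvx ?_)
        have hv' : v ∈ P := hvP
        rw [← he] at hv'
        exact hv'.2
      have h1 := ih (P ⊓ S) (G ⊓ LinearMap.ker (b x)) (by
        rintro y _ ⟨a, ⟨haG, hax⟩, rfl⟩
        refine ⟨hG y ⟨a, haG, rfl⟩, ?_⟩
        exact tangent b ⊤ k hk x hx y a trivial hax) (le_inf hTP (hT2 x hx)) (by omega)
      have h2 := finrank_map_add (b x) G
      have h3 : finrank K (G.map (b x)) ≤ finrank K (P ⊓ S : Submodule K V) := by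
        apply Submodule.finrank_mono
        refine le_inf (hG x) ?_
        rintro _ ⟨a, _, rfl⟩
        exact ⟨a, trivial, rfl⟩
      have h4 : finrank K (G ⊓ LinearMap.ker (b x) ⊓ Z' : Submodule K V) ≤
          finrank K (G ⊓ Z' : Submodule K V) := by
        apply Submodule.finrank_mono
        exact inf_le_inf_right _ inf_le_left
      nlinarith

/-- The part of the space whose brackets fall into `T`. -/
theorem SympData.deep_bound (h : SympData b θ) (k κ : ℕ)
    (hk : ∀ x, finrank K ((⊤ : Submodule K V).map (b x)) ≤ k)
    (X : V) (hX : finrank K ((⊤ : Submodule K V).map (b X)) = k)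
    (Z' G : Submodule K V)
    (hZ' : ∀ z ∈ Z', ∀ y, b y z ∈ (⊤ : Submodule K V).map (b X))
    (hκ : finrank K (Z'.map (b X)) = κ + 1)
    (hG : G ≤ θ.orthogonal ((⊤ : Submodule K V).map (b X)))
    (hGκ : ∀ y, finrank K (G.map (b y)) ≤ κ) :
    2 * finrank K G ≤ 2 * ((k - (κ + 1)) * κ) + κ * (κ + 1)
      + 2 * finrank K (LinearMap.ker b) := by
  set S := (⊤ : Submodule K V).map (b X) with hS
  obtain ⟨C, hC⟩ := Submodule.exists_isCompl (LinearMap.ker (b X) ⊔ Z')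
  have hdC : finrank K C + (κ + 1) = k := by
    have h1 := Submodule.finrank_add_eq_of_isCompl hC
    have h2 := finrank_map_add (b X) (LinearMap.ker (b X) ⊔ Z')
    have h3 := finrank_map_add (b X) ⊤
    have h4 : (LinearMap.ker (b X) ⊔ Z').map (b X) = Z'.map (b X) := by
      rw [Submodule.map_sup, LinearMap.le_ker_iff_map.1 (le_refl (LinearMap.ker (b X))), bot_sup_eq]
    rw [h4, hκ, inf_eq_right.2 le_sup_left] at h2
    rw [top_inf_eq, finrank_top, ← hS] at h3
    omega
  have hperp : ∀ z ∈ G, ∀ v ∈ S, θ v z = 0 := fun z hz v hv => hG hz v hv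
  -- evaluate at a basis of `C`
  let c := Module.finBasis K C
  have step : ∀ n : ℕ, ∀ hn : n ≤ finrank K C, ∃ G' : Submodule K V, G' ≤ G ∧
      finrank K G ≤ finrank K G' + n * κ ∧
      ∀ z ∈ G', ∀ i : Fin (finrank K C), i.1 < n → b (c i) z = 0 := by
    intro n
    induction n with
    | zero => intro _; exact ⟨G, le_rfl, by simp, fun z _ i hi => absurd hi (by omega)⟩
    | succ n ih =>
      intro hn
      obtain ⟨G', h1, h2, h3⟩ := ih (by omega)
      let y : V := c ⟨n, by omega⟩
      refine ⟨G' ⊓ LinearMap.ker (b y), inf_le_left.trans h1, ?_, ?_⟩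
      · have h4 := finrank_map_add (b y) G'
        have h5 := Submodule.finrank_mono (Submodule.map_mono h1 : G'.map (b y) ≤ G.map (b y))
        have h6 := hGκ y
        nlinarith
      · rintro z ⟨hz1, hz2⟩ i hi
        rcases Nat.lt_succ_iff_lt_or_eq.1 hi with h | h
        · exact h3 z hz1 i h
        · have : i = ⟨n, by omega⟩ := Fin.ext h
          rw [this]
          exact hz2
  obtain ⟨G', hG', hd, hz⟩ := step _ le_rfl
  have hzC : ∀ z ∈ G', ∀ w ∈ C, b w z = 0 := by
    intro z hz' w hw
    have h1 : C ≤ LinearMap.ker (b.flip z) := by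
      intro w hw
      have h2 := c.sum_repr ⟨w, hw⟩
      have h3 : w = ∑ i, c.repr ⟨w, hw⟩ i • (c i : V) := by
        have := congrArg (fun v : C => (v : V)) h2
        simpa only [AddSubmonoidClass.coe_finsetSum, Submodule.coe_smul] using this.symm
      rw [h3]
      refine Submodule.sum_mem _ (fun i _ => Submodule.smul_mem _ _ ?_)
      simpa using hz z hz' i i.2
    simpa using h1 hw
  have hsplit : ∀ v, ∃ a ∈ LinearMap.ker (b X) ⊔ Z', ∃ w ∈ C, a + w = v := by
    intro v
    have : v ∈ (LinearMap.ker (b X) ⊔ Z') ⊔ C := by rw [hC.sup_eq_top]; trivial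
    exact Submodule.mem_sup.1 this
  have hkill : ∀ z ∈ G, ∀ a ∈ LinearMap.ker (b X) ⊔ Z', ∀ w, θ (b w a) z = 0 := by
    intro z hz' a ha w
    obtain ⟨a1, ha1, a2, ha2, rfl⟩ := Submodule.mem_sup.1 ha
    rw [map_add, map_add, LinearMap.add_apply,
      hperp z hz' _ (tangent b ⊤ k hk X hX w a1 trivial ha1),
      hperp z hz' _ (hZ' a2 ha2 w), add_zero]
  have hU : ∀ u ∈ G', ∀ x y, θ (b x y) u = 0 := by
    intro u hu x y
    obtain ⟨a, ha, w, hw, rfl⟩ := hsplit x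
    obtain ⟨a', ha', w', hw', rfl⟩ := hsplit y
    have e1 := hkill u (hG' hu) a' ha' (a + w)
    have e2 : θ (b a w') u = 0 := by
      rw [h.skew, map_neg, LinearMap.neg_apply, hkill u (hG' hu) a ha w', neg_zero]
    have e3 : θ (b w w') u = 0 := by
      have := h.hcl w w' u
      rw [h.skew u w, hzC u hu w hw, hzC u hu w' hw'] at this
      simpa using this
    rw [map_add (b (a + w)), map_add θ, LinearMap.add_apply, e1, map_add b, LinearMap.add_apply,
      map_add θ, LinearMap.add_apply, e2, e3]
    simp
  have hs := h.sym_bound κ G' hU (fun y => le_trans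
    (Submodule.finrank_mono (Submodule.map_mono hG')) (hGκ y))
  have : k - (κ + 1) = finrank K C := by omega
  rw [this]
  nlinarith

end Estimates

section Arithmetic

theorem arith_one (k r s n d z : ℕ) (hk : k = r + s + 1) (hd : 2 * d ≤ 2 * k + r * (r + 1))
    (hn : 2 * n ≤ 2 * d + 2 * k + s * (s + 1) + 2 * z) (hr : r = 0 ∨ k ≤ 3 * s) :
    2 * (d + n) ≤ k * (k + 5) + 2 * z := by
  have h1 : r * (r + 1) ≤ r * (2 * s) := by
    rcases hr with h | h
    · subst h; simp
    · exact Nat.mul_le_mul_left _ (by omega)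
  subst hk
  nlinarith

theorem arith_two (k r s σ i n d z f f2 gg : ℕ) (hk : k = r + s + 1)
    (hd : 2 * d ≤ 2 * k + r * (r + 1)) (hn : n ≤ 2 * k + f) (hf : f ≤ s + f2)
    (hi : s = σ + i) (hf2 : 2 * f2 + i ≤ 2 * gg + i * (2 * σ + i)) (hg : gg ≤ z) :
    2 * (d + n) ≤ k * (k + 5) + 2 * z := by
  subst hi
  subst hk
  have h0 : σ ≤ σ * σ := Nat.le_mul_self σ
  have h1 : i * (2 * σ + i) + σ ≤ (σ + i) * (σ + i) := by nlinarith
  nlinarith [Nat.zero_le (r * σ), Nat.zero_le (r * i)]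

theorem arith_three (k r s σ i κ n d z f f2 gg : ℕ) (hk : k = r + s + 1)
    (hd : 2 * d ≤ 2 * k + r * (r + 1)) (hn : n ≤ 2 * k + f) (hf : f ≤ s + f2)
    (hi : s = σ + i) (hf2 : 2 * f2 + i ≤ 2 * gg + i * (2 * σ + i))
    (hg : 2 * gg ≤ 2 * ((k - (κ + 1)) * κ) + κ * (κ + 1) + 2 * z)
    (hκ : κ ≤ σ) (hσ : σ + 1 ≤ s) (hs : 3 * s < k) :
    2 * (d + n) ≤ k * (k + 5) + 2 * z := by
  obtain ⟨e, rfl⟩ := Nat.exists_eq_add_of_le hκ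
  obtain ⟨a, rfl⟩ : ∃ a, i = a + 1 := ⟨i - 1, by omega⟩
  subst hi
  obtain ⟨c, rfl⟩ : ∃ c, r = 2 * (κ + e + (a + 1)) + c := ⟨r - 2 * (κ + e + (a + 1)), by omega⟩
  subst hk
  have h1 : 2 * (κ + e + (a + 1)) + c + (κ + e + (a + 1)) + 1 - (κ + 1) =
    2 * (κ + e + (a + 1)) + c + (e + (a + 1)) := by omega
  rw [h1] at hg
  ring_nf at *
  nlinarith [Nat.zero_le (e * e), Nat.zero_le (a * a), Nat.zero_le (c * e), Nat.zero_le (c * a), Nat.zero_le (a * e), Nat.zero_le (κ * e), Nat.zero_le (κ * a), Nat.zero_le (c * κ), Nat.zero_le (κ * κ)]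

end Arithmetic

section MainEstimate

variable {K : Type*} [Field K] [CharZero K] {V : Type*} [AddCommGroup V] [Module K V]
  {b : V →ₗ[K] V →ₗ[K] V} {θ : LinearMap.BilinForm K V}

theorem SympData.exists_quad (h : SympData b θ) (hb : b ≠ 0) : ∃ w x, θ (b x w) x ≠ 0 := by
  by_contra hcon
  push Not at hcon
  have hs : ∀ x y w, θ (b x w) y = - θ (b y w) x := by
    intro x y w
    have := hcon w (x + y)
    simp only [map_add, LinearMap.add_apply, hcon] at this
    linear_combination this
  apply hb
  ext x y
  rw [LinearMap.zero_apply, LinearMap.zero_apply]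
  apply h.hnd
  intro z
  have h1 := h.hcl x y z
  have e1 : θ (b y z) x = θ (b x y) z := by
    rw [hs y x z, h.skew x z, map_neg, LinearMap.neg_apply, neg_neg,
      hs z y x, h.skew y x, map_neg, LinearMap.neg_apply, neg_neg]
  have e2 : θ (b z x) y = θ (b x y) z := by
    rw [h.skew z x, map_neg, LinearMap.neg_apply, hs x y z, neg_neg, e1]
  rw [e1, e2] at h1
  have h3 : (3 : K) * θ (b x y) z = 0 := by linear_combination h1
  simpa using h3

variable [FiniteDimensional K V]

/-- The number `r` of new directions modulo the image at `X`. -/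
theorem SympData.step_r (h : SympData b θ) (k : ℕ)
    (hk : ∀ x, finrank K ((⊤ : Submodule K V).map (b x)) ≤ k)
    (X : V) (hX : finrank K ((⊤ : Submodule K V).map (b X)) = k)
    (w0 : V) (hw0 : θ (b X w0) X ≠ 0) :
    ∃ (r : ℕ) (Q : V → Prop),
      2 * finrank K (Submodule.span K {w | ∃ x y, w = b x y}) ≤ 2 * k + r * (r + 1) ∧
      Gen K Q ∧ ∀ y, Q y → finrank K ((⊤ : Submodule K V).map (b y)) = k ∧
        finrank K ((⊤ : Submodule K V).map (b X) ⊓ (⊤ : Submodule K V).map (b y) :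
          Submodule K V) + r = k ∧ θ (b X y) X ≠ 0 := by
  set S := (⊤ : Submodule K V).map (b X) with hS
  set Φ := b.compr₂ S.mkQ with hΦ
  have hmap : ∀ y, (⊤ : Submodule K V).map (Φ y) = ((⊤ : Submodule K V).map (b y)).map S.mkQ := by
    intro y
    rw [← Submodule.map_comp]
    rfl
  obtain ⟨r, hr1, hr2⟩ := exists_max_rank Φ ⊤
  refine ⟨r, _, ?_, ((gen_rank b ⊤ k hk ⟨X, hX⟩).and (gen_rank Φ ⊤ r hr1 hr2)).and
    (gen_linear ((θ.flip X).comp (b X)) w0 (by simpa using hw0)), ?_⟩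
  · have h1 := finrank_span_alt r _ Φ (fun x => by simp [hΦ, h.hb]) hr1
    have h2 := finrank_map_add S.mkQ (Submodule.span K {w | ∃ x y, w = b x y})
    have h3 : (Submodule.span K {w | ∃ x y, w = b x y}).map S.mkQ =
        Submodule.span K {w | ∃ x y, w = Φ x y} := by
      rw [Submodule.map_span]
      congr 1
      ext w
      constructor
      · rintro ⟨_, ⟨x, y, rfl⟩, rfl⟩
        exact ⟨x, y, rfl⟩
      · rintro ⟨x, y, rfl⟩
        exact ⟨_, ⟨x, y, rfl⟩, rfl⟩
    have h4 : finrank K (Submodule.span K {w | ∃ x y, w = b x y} ⊓ LinearMap.ker S.mkQ :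
        Submodule K V) ≤ k := by
      rw [← hX]
      apply Submodule.finrank_mono
      rw [Submodule.ker_mkQ]
      exact inf_le_right
    rw [h3] at h2
    omega
  · rintro y ⟨⟨hy1, hy2⟩, hy3⟩
    refine ⟨hy1, ?_, by simpa using hy3⟩
    have h2 := finrank_map_add S.mkQ ((⊤ : Submodule K V).map (b y))
    rw [← hmap, hy2, hy1, Submodule.ker_mkQ, inf_comm] at h2
    omega

/-- The estimate at a sufficiently general point `X`. -/
theorem SympData.core (h : SympData b θ) (k : ℕ)
    (hk : ∀ x, finrank K ((⊤ : Submodule K V).map (b x)) ≤ k)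
    (X : V) (hX : finrank K ((⊤ : Submodule K V).map (b X)) = k)
    (w0 : V) (hw0 : θ (b X w0) X ≠ 0) (T Z' : Submodule K V)
    (hT : ∀ v, v ∈ T ↔ ∀ x, finrank K ((⊤ : Submodule K V).map (b x)) = k →
      v ∈ (⊤ : Submodule K V).map (b x))
    (hZ' : ∀ z, z ∈ Z' ↔ ∀ y, b y z ∈ T)
    (hκ : ∀ y, finrank K (Z'.map (b y)) ≤ finrank K (Z'.map (b X)))
    (hdeep : (∀ z ∈ Z', ∀ y, b y z = 0) ∨ ∃ y0, ∃ z0 ∈ Z', θ (b y0 z0) X ≠ 0) :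
    2 * (finrank K (Submodule.span K {w | ∃ x y, w = b x y}) + finrank K V) ≤
      k * (k + 5) + 2 * finrank K (LinearMap.ker b) := by
  obtain ⟨r, Q, hd, hQ, hQ'⟩ := h.step_r k hk X hX w0 hw0
  set D := Submodule.span K {w | ∃ x y, w = b x y} with hD
  set S := (⊤ : Submodule K V).map (b X) with hS
  set H := LinearMap.ker (θ.flip X) with hH
  set A := LinearMap.ker (b X) with hA
  set F := A ⊓ θ.orthogonal S with hF
  have hSy : ∀ y w, b y w ∈ (⊤ : Submodule K V).map (b y) := fun y w => ⟨w, trivial, rfl⟩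
  have hAS : ∀ a ∈ A, ∀ y, b y a ∈ S := fun a ha y =>
    tangent b ⊤ k hk X hX y a trivial ha
  -- values of `F`
  have hFle : ∀ y, F.map (b y) ≤ (S ⊓ (⊤ : Submodule K V).map (b y)) ⊓ H := by
    rintro y _ ⟨f, ⟨hf1, hf2⟩, rfl⟩
    refine ⟨⟨hAS f hf1 y, hSy y f⟩, ?_⟩
    have e1 : b X f = 0 := hf1
    have e2 : θ (b X y) f = 0 := hf2 _ (hSy X y)
    have := h.cl X y f
    rw [e1, e2] at this
    simpa [hH] using this
  have hPs : ∀ y, Q y → finrank K ((S ⊓ (⊤ : Submodule K V).map (b y)) ⊓ H : Submodule K V)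
      + 1 + r ≤ k := by
    intro y hy
    obtain ⟨h1, h2, h3⟩ := hQ' y hy
    have h4 := inf_ker_lt (S ⊓ (⊤ : Submodule K V).map (b y)) (θ.flip X) (b X y)
      ⟨hSy X y, by
        rw [h.skew]
        exact Submodule.neg_mem _ (hSy y X)⟩ (by simpa using h3)
    rw [← hH] at h4
    omega
  obtain ⟨y, hy⟩ := hQ.1
  obtain ⟨hy1, hy2, hy3⟩ := hQ' y hy
  have hPy := hPs y hy
  obtain ⟨s, hs⟩ : ∃ s, k = r + s + 1 := ⟨k - r - 1, by omega⟩
  have hFs : ∀ w, finrank K (F.map (b w)) ≤ s :=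
    rank_le_of_gen b F s hQ (fun w hw => by
      have h1 := Submodule.finrank_mono (hFle w)
      have h2 := hPs w hw
      omega)
  have hSD : S ≤ D := by
    rintro _ ⟨w, _, rfl⟩
    exact Submodule.subset_span ⟨X, w, rfl⟩
  by_cases hreg : r = 0 ∨ k ≤ 3 * s
  · -- first regime
    have hU := h.finrank_orth D
    have hUF : θ.orthogonal D ⊓ A ≤ F := by
      rintro u ⟨hu1, hu2⟩
      exact ⟨hu2, fun v hv => hu1 v (hSD hv)⟩
    have h1 := h.sym_bound s (θ.orthogonal D ⊓ A)
      (fun u hu x y => hu.1 _ (Submodule.subset_span ⟨x, y, rfl⟩))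
      (fun w => (Submodule.finrank_mono (Submodule.map_mono hUF)).trans (hFs w))
    have h2 := finrank_map_add (b X) (θ.orthogonal D)
    have h3 : finrank K ((θ.orthogonal D).map (b X)) ≤ k := by
      rw [← hX]
      exact Submodule.finrank_mono (Submodule.map_mono le_top)
    rw [← hA] at h2
    exact arith_one k r s _ _ _ hs hd (by nlinarith) hreg
  · push Not at hreg
    obtain ⟨hr0, hsk⟩ := hreg
    have hn : finrank K V ≤ 2 * k + finrank K F := by
      have h1 := h.finrank_orth S
      have h2 := finrank_map_add (b X) (θ.orthogonal S)
      have h3 : finrank K ((θ.orthogonal S).map (b X)) ≤ k := by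
        rw [← hX]
        exact Submodule.finrank_mono (Submodule.map_mono le_top)
      rw [← hA, inf_comm, ← hF] at h2
      omega
    set F2 := F ⊓ LinearMap.ker (b y) with hF2
    have hf : finrank K F ≤ s + finrank K F2 := by
      have h1 := finrank_map_add (b y) F
      rw [← hF2] at h1
      have h2 := hFs y
      omega
    set P := (S ⊓ (⊤ : Submodule K V).map (b y)) ⊓ H with hP
    have hF2P : ∀ w, F2.map (b w) ≤ P := by
      rintro w _ ⟨f, ⟨hf1, hf2⟩, rfl⟩
      have h1 := hFle w ⟨f, hf1, rfl⟩
      exact ⟨⟨h1.1.1, tangent b ⊤ k hk y hy1 w f trivial hf2⟩, h1.2⟩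
    have hTx : ∀ x, finrank K ((⊤ : Submodule K V).map (b x)) = k →
        T ≤ (⊤ : Submodule K V).map (b x) := fun x hx v hv => (hT v).1 hv x hx
    have hTS : T ≤ S := hTx X hX
    have hT'P : T ⊓ H ≤ P := inf_le_inf_right _ (le_inf hTS (hTx y hy1))
    obtain ⟨i, hi⟩ : ∃ i, s = finrank K (T ⊓ H : Submodule K V) + i := by
      have := Submodule.finrank_mono hT'P
      exact ⟨s - finrank K (T ⊓ H : Submodule K V), by omega⟩
    have hch := h.chain_bound k hk T Z' (T ⊓ H) (fun v => (hT v).2)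
      (fun x hx => inf_le_left.trans (hTx x hx)) (fun z => (hZ' z).2) i P F2 hF2P hT'P (by omega)
    rcases hdeep with hdeep | ⟨y0, z0, hz0, hyz⟩
    · have hg : finrank K (F2 ⊓ Z' : Submodule K V) ≤ finrank K (LinearMap.ker b) :=
        Submodule.finrank_mono (fun z hz => h.mem_ker z (hdeep z hz.2))
      exact arith_two k r s _ i _ _ _ _ _ _ hs hd hn hf hi hch hg
    · have hκ0 : 1 ≤ finrank K (Z'.map (b X)) := by
        refine le_trans ?_ (hκ y0)
        rw [Nat.one_le_iff_ne_zero, Ne, Submodule.finrank_eq_zero]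
        intro h0
        have : b y0 z0 ∈ Z'.map (b y0) := ⟨z0, hz0, rfl⟩
        rw [h0, Submodule.mem_bot] at this
        rw [this] at hyz
        simp at hyz
      obtain ⟨κ, hκe⟩ : ∃ κ, finrank K (Z'.map (b X)) = κ + 1 := ⟨_, (Nat.sub_add_cancel hκ0).symm⟩
      have hgen : Gen K (fun w => (((θ.flip X).comp (b.flip z0)) w) ≠ 0) :=
        gen_linear _ y0 (by simpa using hyz)
      have hGκ : ∀ w, finrank K ((F2 ⊓ Z').map (b w)) ≤ κ := by
        refine rank_le_of_gen b _ κ hgen (fun w hw => ?_)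
        have h1 : (F2 ⊓ Z').map (b w) ≤ Z'.map (b w) ⊓ H := by
          rintro _ ⟨f, ⟨hf1, hf2⟩, rfl⟩
          exact ⟨⟨f, hf2, rfl⟩, (hFle w ⟨f, hf1.1, rfl⟩).2⟩
        have h2 := inf_ker_lt (Z'.map (b w)) (θ.flip X) (b w z0) ⟨z0, hz0, rfl⟩ (by simpa using hw)
        rw [← hH] at h2
        have h3 := Submodule.finrank_mono h1
        have h4 := hκ w
        omega
      have hg := h.deep_bound k κ hk X hX Z' (F2 ⊓ Z')
        (fun z hz w => hTS ((hZ' z).1 hz w)) hκe (fun z hz => hz.1.1.2) hGκ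
      have hTlt := inf_ker_lt T (θ.flip X) (b y0 z0) ((hZ' z0).1 hz0 y0) (by simpa using hyz)
      have hTle := le_inf_ker T (θ.flip X)
      rw [← hH] at hTlt hTle
      have hκT : κ + 1 ≤ finrank K T := by
        rw [← hκe]
        apply Submodule.finrank_mono
        rintro _ ⟨z, hz, rfl⟩
        exact (hZ' z).1 hz X
      have hTs : finrank K T ≤ s := by
        have hTy : ∀ w, Q w → T ≤ S ⊓ (⊤ : Submodule K V).map (b w) := fun w hw =>
          le_inf hTS (hTx w (hQ' w hw).1)
        have h1 := Submodule.finrank_mono (hTy y hy)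
        by_contra hcon
        have h2 : ∀ w, finrank K (A.map ((b.compr₂ T.mkQ) w)) ≤ 0 := by
          refine rank_le_of_gen _ A 0 hQ (fun w hw => ?_)
          have h3 : T = S ⊓ (⊤ : Submodule K V).map (b w) :=
            Submodule.eq_of_le_of_finrank_le (hTy w hw) (by
              have := (hQ' w hw).2.1
              omega)
          have h4 : A.map ((b.compr₂ T.mkQ) w) = ⊥ := by
            rw [eq_bot_iff]
            rintro _ ⟨a, ha, rfl⟩
            have : b w a ∈ T := by
              rw [h3]
              exact ⟨hAS a ha w, hSy w a⟩
            simpa using this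
          rw [h4]
          simp
        have h5 : S ≤ T := by
          rintro _ ⟨w, _, rfl⟩
          rw [h.skew]
          refine Submodule.neg_mem _ ?_
          have h6 := h2 w
          rw [Nat.le_zero, Submodule.finrank_eq_zero] at h6
          have h7 : (b.compr₂ T.mkQ) w X ∈ A.map ((b.compr₂ T.mkQ) w) := ⟨X, h.hb X, rfl⟩
          rw [h6] at h7
          simpa using h7
        have h8 := Submodule.finrank_mono h5
        omega
      exact arith_three k r s _ i κ _ _ _ _ _ _ hs hd hn hf hi hch hg (by omega) (by omega)
        (by omega)

/-- The main dimension estimate. -/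
theorem SympData.main (h : SympData b θ) (hb : b ≠ 0) (k : ℕ)
    (hk : ∀ x, finrank K ((⊤ : Submodule K V).map (b x)) ≤ k)
    (hex : ∃ x, finrank K ((⊤ : Submodule K V).map (b x)) = k) :
    2 * (finrank K (Submodule.span K {w | ∃ x y, w = b x y}) + finrank K V) ≤
      k * (k + 5) + 2 * finrank K (LinearMap.ker b) := by
  let T : Submodule K V := ⨅ (x : V) (_ : finrank K ((⊤ : Submodule K V).map (b x)) = k),
    (⊤ : Submodule K V).map (b x)
  let Z' : Submodule K V := ⨅ y, T.comap (b y)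
  have hT : ∀ v, v ∈ T ↔ ∀ x, finrank K ((⊤ : Submodule K V).map (b x)) = k →
      v ∈ (⊤ : Submodule K V).map (b x) := by
    intro v
    simp only [T, Submodule.mem_iInf]
  have hZ' : ∀ z, z ∈ Z' ↔ ∀ y, b y z ∈ T := by
    intro z
    simp only [Z', Submodule.mem_iInf, Submodule.mem_comap]
  obtain ⟨w, x, hx⟩ := h.exists_quad hb
  obtain ⟨ρ, hρ1, hρ2⟩ := exists_max_rank b Z'
  have hgen := ((gen_rank b ⊤ k hk hex).and (gen_rank b Z' ρ hρ1 hρ2)).and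
    (gen_quad (θ.comp (b.flip w) LinearMap.id) x (by simpa using hx))
  by_cases hdeep : ∀ z ∈ Z', ∀ y, b y z = 0
  · obtain ⟨X, ⟨hX1, hX2⟩, hX3⟩ := hgen.1
    exact h.core k hk X hX1 w (by simpa using hX3) T Z' hT hZ'
      (fun y => hX2 ▸ hρ1 y) (Or.inl hdeep)
  · push Not at hdeep
    obtain ⟨z0, hz0, y0, hyz⟩ := hdeep
    have : ∃ v, θ (b y0 z0) v ≠ 0 := by
      by_contra hcon
      push Not at hcon
      exact hyz (h.hnd _ hcon)
    obtain ⟨v, hv⟩ := this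
    obtain ⟨X, ⟨⟨hX1, hX2⟩, hX3⟩, hX4⟩ := (hgen.and (gen_linear (θ (b y0 z0)) v hv)).1
    exact h.core k hk X hX1 w (by simpa using hX3) T Z' hT hZ'
      (fun y => hX2 ▸ hρ1 y) (Or.inr ⟨y0, z0, hz0, hX4⟩)

end MainEstimate

/-- Splitting off a central subspace of prescribed codimension. -/
theorem exists_split {K : Type*} [Field K] {V : Type*} [AddCommGroup V] [Module K V]
    [FiniteDimensional K V] (D Z : Submodule K V) (hDZ : D ≤ Z) (m : ℕ)
    (hm : finrank K D + finrank K V ≤ m + finrank K Z) (hlt : m ≤ finrank K V) :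
    ∃ I J : Submodule K V, D ≤ I ∧ J ≤ Z ∧ IsCompl I J ∧ finrank K I = m := by
  obtain ⟨C, hC⟩ := Submodule.exists_isCompl D
  have h1 : D ⊔ (C ⊓ Z) = Z := by
    rw [← sup_inf_assoc_of_le C hDZ, hC.sup_eq_top, top_inf_eq]
  have h2 : D ⊓ (C ⊓ Z) = ⊥ := by
    rw [← inf_assoc, hC.inf_eq_bot, bot_inf_eq]
  have h3 := Submodule.finrank_sup_add_finrank_inf_eq D (C ⊓ Z)
  rw [h1, h2, finrank_bot] at h3
  let B := Module.finBasis K (C ⊓ Z : Submodule K V)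
  have hle : finrank K V - m ≤ finrank K (C ⊓ Z : Submodule K V) := by omega
  let v : Fin (finrank K V - m) → V := fun i => (B (Fin.castLE hle i) : V)
  have hv : LinearIndependent K v :=
    (B.linearIndependent.map' (C ⊓ Z).subtype (Submodule.ker_subtype _)).comp
      (Fin.castLE hle) (Fin.castLE_injective hle)
  have hJ := finrank_span_eq_card hv
  rw [Fintype.card_fin] at hJ
  have hJC : Submodule.span K (Set.range v) ≤ C ⊓ Z := by
    rw [Submodule.span_le]
    rintro _ ⟨i, rfl⟩
    exact (B (Fin.castLE hle i)).2
  have hdis : Disjoint D (Submodule.span K (Set.range v)) :=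
    (disjoint_iff.2 h2).mono_right hJC
  obtain ⟨I, hI1, hI2⟩ := hdis.exists_isCompl
  refine ⟨I, _, hI1, hJC.trans inf_le_right, hI2, ?_⟩
  have h4 := Submodule.finrank_add_eq_of_isCompl hI2
  omega

/-- Let `g` be a 2-step nilpotent symplectic Lie algebra over `K` with characteristic
sequence `(2,…,2,1,…,1)` containing exactly `k` twos. If `dim g > k(k+5)/2` then `g` is
decomposable: it is the direct product of a Lie algebra of dimension `k(k+5)/2` with a
nonzero abelian ideal. -/
theorem decomposable_of_charSeqTwos_symplectic_of_large_dim
    (K : Type*) [RCLike K] (g : Type*) [LieRing g] [LieAlgebra K g] [FiniteDimensional K g]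
    (k : ℕ) (h2 : IsTwoStepNilpotent g) (hc : HasCharSeqTwos K g k)
    (hdim : Module.finrank K g > k * (k + 5) / 2)
    (θ : g → g → K) (hθ : IsSymplecticForm K g θ) :
    ∃ I J : LieIdeal K g, I ⊓ J = ⊥ ∧ I ⊔ J = ⊤ ∧
      Module.finrank K ↥I = k * (k + 5) / 2 ∧ J ≠ ⊥ ∧
      (∀ x ∈ J, ∀ y ∈ J, ⁅x, y⁆ = (0 : g)) := by
  obtain ⟨t1, t2, t3, t4, t5⟩ := hθ
  obtain ⟨hnil, x0, y0, hxy⟩ := h2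
  obtain ⟨hc1, hc2⟩ := hc
  have z1 : ∀ Z, θ 0 Z = 0 := fun Z => by simpa using t1 1 0 0 Z
  have z2 : ∀ Z, θ Z 0 = 0 := fun Z => by simpa using t2 1 Z 0 0
  let Θ : LinearMap.BilinForm K g := LinearMap.mk₂ K θ
    (fun x y z => by simpa using t1 1 x y z)
    (fun a x y => by simpa [z1] using t1 a x 0 y)
    (fun x y z => by simpa using t2 1 x y z)
    (fun a x y => by simpa [z2] using t2 a x y 0)
  let b : g →ₗ[K] g →ₗ[K] g := (LieAlgebra.ad K g : g →ₗ[K] Module.End K g)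
  have hbb : ∀ x y, b x y = ⁅x, y⁆ := fun x y => rfl
  have h : SympData b Θ :=
    { hb := fun x => by simp [hbb]
      ha := fun x => t3 x
      hnd := fun x hx => t4 x hx
      hcl := fun x y z => t5 x y z }
  have hb0 : b ≠ 0 := by
    intro h0
    apply hxy
    rw [← hbb, h0]
    rfl
  have hrange : ∀ x, (⊤ : Submodule K g).map (b x) = LinearMap.range (LieAlgebra.ad K g x) :=
    fun x => Submodule.map_top _
  set D := Submodule.span K {w | ∃ x y, w = b x y} with hD
  have hder : ∀ x, x ∈ LieAlgebra.derivedSeries K g 1 → x ∈ LinearMap.ker b := by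
    intro x hx
    rw [LieAlgebra.derivedSeries_def, LieAlgebra.derivedSeriesOfIdeal_succ,
      LieAlgebra.derivedSeriesOfIdeal_zero, ← LieSubmodule.mem_toSubmodule,
      LieSubmodule.lieIdeal_oper_eq_linear_span'] at hx
    refine Submodule.span_le.2 ?_ hx
    rintro _ ⟨u, _, v, _, rfl⟩
    rw [SetLike.mem_coe, LinearMap.mem_ker]
    ext w
    exact hnil u v w
  have hk : ∀ x, finrank K ((⊤ : Submodule K g).map (b x)) ≤ k := by
    intro x
    by_cases hx : x ∈ LieAlgebra.derivedSeries K g 1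
    · have h1 : b x = 0 := hder x hx
      rw [h1, Submodule.map_zero, finrank_bot]
      exact Nat.zero_le k
    · rw [hrange]
      exact hc1 x hx
  have hex : ∃ x, finrank K ((⊤ : Submodule K g).map (b x)) = k := by
    obtain ⟨x, _, hx⟩ := hc2
    exact ⟨x, by rw [hrange]; exact hx⟩
  have hmain := h.main hb0 k hk hex
  have hDZ : D ≤ LinearMap.ker b := by
    rw [hD, Submodule.span_le]
    rintro _ ⟨u, v, rfl⟩
    rw [SetLike.mem_coe, LinearMap.mem_ker]
    ext w
    exact hnil u v w
  have heven : 2 ∣ k * (k + 5) := by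
    rcases Nat.even_or_odd k with hk' | hk'
    · exact hk'.two_dvd.mul_right _
    · exact (hk'.add_odd (by decide)).two_dvd.mul_left _
  obtain ⟨I, J, hI, hJ, hIJ, hdI⟩ := exists_split D (LinearMap.ker b) hDZ (k * (k + 5) / 2)
    (by rw [← hD] at hmain; omega) hdim.le
  let I' : LieIdeal K g := { I with
    lie_mem := fun {x m} _ => hI (Submodule.subset_span ⟨x, m, rfl⟩) }
  let J' : LieIdeal K g := { J with
    lie_mem := fun {x m} hm => by
      have h1 : b x m = 0 := h.mem_ker' m (hJ hm) x
      have h2 : ⁅x, m⁆ = 0 := h1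
      rw [h2]
      exact J.zero_mem }
  refine ⟨I', J', ?_, ?_, hdI, ?_, ?_⟩
  · rw [← LieSubmodule.toSubmodule_inj]
    simpa using hIJ.inf_eq_bot
  · rw [← LieSubmodule.toSubmodule_inj]
    simpa using hIJ.sup_eq_top
  · intro h0
    have h1 : J = ⊥ := by
      have h4 : (J' : Submodule K g) = ⊥ := by rw [h0]; rfl
      exact h4
    have h3 := Submodule.finrank_add_eq_of_isCompl hIJ
    rw [h1, finrank_bot] at h3
    omega
  · intro x _ y hy
    exact h.mem_ker' y (hJ hy) x
end

section
/- If g is a 2-step nilpotent symplectic Lie algebra over K (K = ℝ or ℂ) with characteristic sequence (2,…,2,1,…,1) containing exactly k twos, and g is indecomposable, then dim g ≤ k(k+5)/2. -/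
open Module in
theorem aux_finrank_split {K W E : Type*} [Field K] [AddCommGroup W] [Module K W]
    [FiniteDimensional K W] [AddCommGroup E] [Module K E] (G : Submodule K W) (f : W →ₗ[K] E) :
    finrank K G = finrank K (G.map f) + finrank K ↥(G ⊓ LinearMap.ker f) := by
  have h := LinearMap.finrank_range_add_finrank_ker (f.domRestrict G)
  rw [← h, LinearMap.range_domRestrict]
  congr 1
  have : LinearMap.ker (f.domRestrict G) = (G ⊓ LinearMap.ker f).comap G.subtype := by
    ext x; simp
  rw [this]
  exact (Submodule.comapSubtypeEquivOfLe (inf_le_left)).finrank_eq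

open Module in
theorem aux_finrank_map_add {K W E : Type*} [Field K] [AddCommGroup W] [Module K W]
    [FiniteDimensional K W] [AddCommGroup E] [Module K E] [FiniteDimensional K E]
    (G : Submodule K W) (f f₁ f₂ : W →ₗ[K] E) (h : ∀ w ∈ G, f w = f₁ w + f₂ w) :
    finrank K (G.map f) ≤ finrank K (G.map f₁) + finrank K (G.map f₂) := by
  have h1 : G.map f ≤ G.map f₁ ⊔ G.map f₂ := by
    rintro _ ⟨w, hw, rfl⟩
    rw [h w hw]
    exact Submodule.add_mem_sup (Submodule.mem_map_of_mem hw) (Submodule.mem_map_of_mem hw)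
  exact (Submodule.finrank_mono h1).trans (Submodule.finrank_add_le_finrank_add_finrank _ _)

open Filter in
theorem aux_det_generic {K ι : Type*} [Field K] [Fintype ι] [DecidableEq ι]
    (A B : Matrix ι ι K) (h : A.det ≠ 0 ∨ B.det ≠ 0) :
    ∀ᶠ t : K in cofinite, (A + t • B).det ≠ 0 := by
  classical
  set p : Polynomial K :=
    Matrix.det ((Polynomial.X : Polynomial K) • B.map Polynomial.C + A.map Polynomial.C) with hp
  have hp0 : p ≠ 0 := by
    intro h0
    rcases h with h | h
    · apply h
      rw [← Polynomial.coeff_det_X_add_C_zero B A, ← hp, h0]; simp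
    · apply h
      rw [← Polynomial.coeff_det_X_add_C_card B A, ← hp, h0]; simp
  have hev : ∀ t, p.eval t = (A + t • B).det := by
    intro t
    rw [hp, ← Polynomial.coe_evalRingHom, RingHom.map_det]
    congr 1
    ext i j
    simp [add_comm]
    ring
  have hfin : {t : K | p.IsRoot t}.Finite := Polynomial.finite_setOfPred_isRoot hp0
  rw [Filter.eventually_cofinite]
  refine hfin.subset ?_
  intro t ht
  simp only [Set.mem_ofPred_eq, not_not] at ht ⊢
  rw [Polynomial.IsRoot.def, hev, ht]

open Filter in
theorem aux_indep_generic {K E ι : Type*} [Field K] [AddCommGroup E] [Module K E]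
    [Fintype ι] (v w : ι → E) (h : LinearIndependent K v ∨ LinearIndependent K w) :
    ∀ᶠ t : K in cofinite, LinearIndependent K (fun i => v i + t • w i) := by
  classical
  have key : ∀ u : ι → E, LinearIndependent K u → ∃ g : E →ₗ[K] (ι → K),
      Matrix.det (Matrix.of (fun i j => g (u i) j)) ≠ 0 := by
    intro u hu
    have hinj : LinearMap.ker (Fintype.linearCombination K u) = ⊥ :=
      LinearMap.ker_eq_bot.2 (linearIndependent_iff_injective_fintypeLinearCombination.1 hu)
    obtain ⟨g, hg⟩ := LinearMap.exists_leftInverse_of_injective _ hinj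
    refine ⟨g, ?_⟩
    have : Matrix.of (fun i j => g (u i) j) = (1 : Matrix ι ι K) := by
      ext i j
      have h1 := LinearMap.congr_fun hg (Pi.single i 1)
      simp only [LinearMap.comp_apply, Fintype.linearCombination_apply_single, one_smul,
        LinearMap.id_apply] at h1
      simp [h1, Matrix.one_apply, Pi.single_apply, eq_comm]
    rw [this]; simp
  have key2 : ∃ g : E →ₗ[K] (ι → K), Matrix.det (Matrix.of (fun i j => g (v i) j)) ≠ 0 ∨
      Matrix.det (Matrix.of (fun i j => g (w i) j)) ≠ 0 := by
    rcases h with h | h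
    · obtain ⟨g, hg⟩ := key v h; exact ⟨g, Or.inl hg⟩
    · obtain ⟨g, hg⟩ := key w h; exact ⟨g, Or.inr hg⟩
  obtain ⟨g, hg⟩ := key2
  filter_upwards [aux_det_generic _ _ hg] with t ht
  have h1 := Matrix.linearIndependent_rows_of_det_ne_zero ht
  apply LinearIndependent.of_comp g
  have h2 : (g ∘ fun i => v i + t • w i) = fun i => ((Matrix.of fun i j => g (v i) j) +
      t • Matrix.of fun i j => g (w i) j) i := by
    ext i j
    simp
  rw [h2]
  exact h1

open Module in
theorem aux_exists_indep {K W E : Type*} [Field K] [AddCommGroup W] [Module K W]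
    [FiniteDimensional K W] [AddCommGroup E] [Module K E]
    (F : Submodule K W) (f : W →ₗ[K] E) : ∃ e : Fin (finrank K (F.map f)) → W,
      (∀ i, e i ∈ F) ∧ LinearIndependent K (fun i => f (e i)) := by
  have b := finBasis K (F.map f)
  have h : ∀ i, ∃ w ∈ F, f w = (b i : E) := fun i => by
    obtain ⟨w, hw, h⟩ := (b i).2
    exact ⟨w, hw, h⟩
  choose e he hfe using h
  refine ⟨e, he, ?_⟩
  simp only [hfe]
  exact b.linearIndependent.map' (F.map f).subtype (Submodule.ker_subtype _)

open Module in
theorem aux_le_finrank_map {K W E : Type*} [Field K] [AddCommGroup W] [Module K W]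
    [FiniteDimensional K W] [AddCommGroup E] [Module K E]
    (F : Submodule K W) (f : W →ₗ[K] E) {ι : Type*} [Fintype ι] (e : ι → W)
    (he : ∀ i, e i ∈ F) (hi : LinearIndependent K (fun i => f (e i))) :
    Fintype.card ι ≤ finrank K (F.map f) := by
  have h : LinearIndependent K
      (fun i => (⟨f (e i), Submodule.mem_map_of_mem (he i)⟩ : F.map f)) :=
    LinearIndependent.of_comp (F.map f).subtype hi
  exact h.fintype_card_le_finrank

/-- Kernel elements at a point of maximal rank are sent into the image. -/
theorem aux_max_rank {K V W E : Type*} [Field K] [Infinite K] [AddCommGroup V] [Module K V]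
    [AddCommGroup W] [Module K W] [FiniteDimensional K W] [AddCommGroup E] [Module K E]
    (M : V →ₗ[K] W →ₗ[K] E) (F : Submodule K W) (Y₀ : V)
    (hmax : ∀ Y, Module.finrank K (F.map (M Y)) ≤ Module.finrank K (F.map (M Y₀)))
    (w : W) (hw : w ∈ F) (h0 : M Y₀ w = 0) (Y : V) : M Y w ∈ F.map (M Y₀) := by
  by_contra hcon
  obtain ⟨r, hr⟩ : ∃ r, r = Module.finrank K (F.map (M Y₀)) := ⟨_, rfl⟩
  have hex := aux_exists_indep F (M Y₀)
  rw [← hr] at hex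
  obtain ⟨e, heF, hei⟩ := hex
  have hind : LinearIndependent K (Fin.cons (M Y w) (fun i => M Y₀ (e i)) : Fin (r + 1) → E) := by
    rw [linearIndependent_finCons]
    refine ⟨hei, fun h => hcon ?_⟩
    refine (Submodule.span_le.2 ?_) h
    rintro _ ⟨i, rfl⟩
    exact Submodule.mem_map_of_mem (heF i)
  have hg := aux_indep_generic _ (Fin.cons 0 (fun i => M Y (e i)) : Fin (r + 1) → E) (Or.inl hind)
  have hne : ∀ᶠ t : K in Filter.cofinite, t ≠ 0 := by
    rw [Filter.eventually_cofinite]; simp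
  obtain ⟨t, ht, ht0⟩ := (hg.and hne).exists
  have h2 : LinearIndependent K
      (fun i => M (Y₀ + t • Y) ((Fin.cons (t⁻¹ • w) e : Fin (r + 1) → W) i)) := by
    convert ht using 1
    ext i
    refine Fin.cases ?_ (fun i => ?_) i
    · simp [h0, ht0]
    · simp
  have h3 := aux_le_finrank_map F (M (Y₀ + t • Y)) _ (fun i => by
    refine Fin.cases ?_ (fun i => ?_) i
    · simpa using F.smul_mem _ hw
    · simpa using heF i) h2
  have := hmax (Y₀ + t • Y)
  simp at h3
  omega

open Module in
theorem aux_hyperplane {K V : Type*} [Field K] [AddCommGroup V] [Module K V]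
    [FiniteDimensional K V] (I : Submodule K (V →ₗ[K] K)) (u : V) (φ : V →ₗ[K] K)
    (hφ : φ ∈ I) (hu : φ u ≠ 0) :
    finrank K I = finrank K ↥(I ⊓ LinearMap.ker (LinearMap.applyₗ (R := K) (M₂ := K) u)) + 1 := by
  rw [aux_finrank_split I (LinearMap.applyₗ (R := K) (M₂ := K) u), add_comm]
  congr 1
  apply le_antisymm
  · exact (Submodule.finrank_le _).trans (by simp)
  · rw [Nat.one_le_iff_ne_zero]
    intro h
    rw [Submodule.finrank_eq_zero] at h
    have : φ u ∈ I.map (LinearMap.applyₗ (R := K) (M₂ := K) u) := ⟨φ, hφ, by simp⟩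
    rw [h] at this
    exact hu (by simpa using this)

open Module in
theorem aux_chain {K V W : Type*} [Field K] [AddCommGroup V] [Module K V]
    [FiniteDimensional K V] [AddCommGroup W] [Module K W] [FiniteDimensional K W]
    (B Ω : W →ₗ[K] V →ₗ[K] V →ₗ[K] K) (hΩ : ∀ w Y U, Ω w Y U = B w U Y - B w Y U) (y : ℕ) :
    ∀ (x : ℕ) (I : Submodule K (V →ₗ[K] K)) (G : Submodule K W), finrank K I = x →
      (∀ w ∈ G, ∀ Y, B w Y ∈ I) → (∀ Y, finrank K (G.map (Ω.flip Y)) ≤ y) →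
      2 * finrank K G ≤ 2 * finrank K ↥(G ⊓ LinearMap.ker B) + 2 * (x * y) + x * (x + 1) := by
  intro x
  induction x with
  | zero =>
    intro I G hI hB _
    rw [Submodule.finrank_eq_zero] at hI
    have : G ⊓ LinearMap.ker B = G := by
      rw [inf_eq_left]
      intro w hw
      rw [LinearMap.mem_ker]
      refine LinearMap.ext fun Y => ?_
      have := hB w hw Y
      rw [hI] at this
      exact (Submodule.mem_bot K).1 this
    rw [this]; omega
  | succ x ih =>
    intro I G hI hB hy
    have hne : I ≠ ⊥ := by
      rintro rfl; simp at hI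
    obtain ⟨φ, hφ, hφ0⟩ := (Submodule.ne_bot_iff _).1 hne
    obtain ⟨u, hu⟩ : ∃ u, φ u ≠ 0 := by
      by_contra! h
      exact hφ0 (LinearMap.ext h)
    have hI' := aux_hyperplane I u φ hφ hu
    set I' := I ⊓ LinearMap.ker (LinearMap.applyₗ (R := K) (M₂ := K) u) with hI'def
    let f : W →ₗ[K] (V →ₗ[K] K) := (Ω + B).flip u
    have hf : ∀ w Y, f w Y = B w Y u := by
      intro w Y
      simp [f, hΩ]
    have hs := aux_finrank_split G f
    have h1 : finrank K (G.map f) ≤ finrank K (G.map (Ω.flip u)) + finrank K (G.map (B.flip u)) :=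
      aux_finrank_map_add _ _ _ _ (fun w _ => by simp [f])
    have h2 : finrank K (G.map (B.flip u)) ≤ x + 1 := by
      rw [← hI]
      apply Submodule.finrank_mono
      rintro _ ⟨w, hw, rfl⟩
      exact hB w hw u
    have h3 := ih I' (G ⊓ LinearMap.ker f) (by omega) (by
      rintro w ⟨hw, hwf⟩ Y
      refine ⟨hB w hw Y, ?_⟩
      have hwf' : f w = 0 := hwf
      refine LinearMap.mem_ker.2 ?_
      rw [LinearMap.applyₗ_apply_apply, ← hf, hwf']
      simp) (fun Y => (Submodule.finrank_mono (Submodule.map_mono inf_le_left)).trans (hy Y))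
    have h4 : finrank K ↥(G ⊓ LinearMap.ker f ⊓ LinearMap.ker B) ≤ finrank K ↥(G ⊓ LinearMap.ker B) :=
      Submodule.finrank_mono (inf_le_inf_right _ inf_le_left)
    have h5 := hy u
    nlinarith

open Module in
theorem aux_chain_alt {K V W : Type*} [Field K] [AddCommGroup V] [Module K V]
    [FiniteDimensional K V] [AddCommGroup W] [Module K W] [FiniteDimensional K W]
    (B : W →ₗ[K] V →ₗ[K] V →ₗ[K] K) :
    ∀ (x : ℕ) (I : Submodule K (V →ₗ[K] K)) (G : Submodule K W), finrank K I = x →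
      (∀ w ∈ G, ∀ Y, B w Y Y = 0) →
      (∀ w ∈ G, ∀ Y, B w Y ∈ I) →
      2 * finrank K G + x ≤ 2 * finrank K ↥(G ⊓ LinearMap.ker B) + x * x := by
  intro x
  induction x with
  | zero =>
    intro I G hI _ hB
    rw [Submodule.finrank_eq_zero] at hI
    have : G ⊓ LinearMap.ker B = G := by
      rw [inf_eq_left]
      intro w hw
      rw [LinearMap.mem_ker]
      refine LinearMap.ext fun Y => ?_
      have := hB w hw Y
      rw [hI] at this
      exact (Submodule.mem_bot K).1 this
    rw [this]
  | succ x ih =>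
    intro I G hI halt hB
    have hne : I ≠ ⊥ := by
      rintro rfl; simp at hI
    obtain ⟨φ, hφ, hφ0⟩ := (Submodule.ne_bot_iff _).1 hne
    obtain ⟨u, hu⟩ : ∃ u, φ u ≠ 0 := by
      by_contra! h
      exact hφ0 (LinearMap.ext h)
    have hI' := aux_hyperplane I u φ hφ hu
    set I' := I ⊓ LinearMap.ker (LinearMap.applyₗ (R := K) (M₂ := K) u) with hI'def
    have hs := aux_finrank_split G (B.flip u)
    have h2 : finrank K (G.map (B.flip u)) ≤ x := by
      have : finrank K I' = x := by omega
      rw [← this]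
      apply Submodule.finrank_mono
      rintro _ ⟨w, hw, rfl⟩
      refine ⟨hB w hw u, ?_⟩
      simpa using halt w hw u
    have h3 := ih I' (G ⊓ LinearMap.ker (B.flip u)) (by omega)
      (fun w hw => halt w hw.1) (by
      rintro w ⟨hw, hwf⟩ Y
      refine ⟨hB w hw Y, ?_⟩
      have h1 := halt w hw (Y + u)
      have h2 : B w u = 0 := by simpa using hwf
      have h3 := halt w hw Y
      simp only [map_add, LinearMap.add_apply, h2, h3, LinearMap.zero_apply] at h1
      simpa using h1)
    have h4 : finrank K ↥(G ⊓ LinearMap.ker (B.flip u) ⊓ LinearMap.ker B)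
        ≤ finrank K ↥(G ⊓ LinearMap.ker B) :=
      Submodule.finrank_mono (inf_le_inf_right _ inf_le_left)
    nlinarith

open Module in
/-- Spaces of alternating forms. -/
theorem aux_alt {K V W : Type*} [Field K] [Infinite K] [AddCommGroup V] [Module K V]
    [FiniteDimensional K V] [AddCommGroup W] [Module K W] [FiniteDimensional K W]
    (B : W →ₗ[K] V →ₗ[K] V →ₗ[K] K) (G : Submodule K W) (halt : ∀ w ∈ G, ∀ Y, B w Y Y = 0)
    (Y₀ : V) (hmax : ∀ Y, finrank K (G.map (B.flip Y)) ≤ finrank K (G.map (B.flip Y₀))) :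
    2 * finrank K G ≤ 2 * finrank K ↥(G ⊓ LinearMap.ker B) +
      finrank K (G.map (B.flip Y₀)) * (finrank K (G.map (B.flip Y₀)) + 1) := by
  have hs := aux_finrank_split G (B.flip Y₀)
  have h := aux_chain_alt B _ (G.map (B.flip Y₀)) (G ⊓ LinearMap.ker (B.flip Y₀)) rfl
    (fun w hw => halt w hw.1) (fun w hw Y => aux_max_rank B.flip G Y₀ hmax w hw.1 hw.2 Y)
  have h4 : finrank K ↥(G ⊓ LinearMap.ker (B.flip Y₀) ⊓ LinearMap.ker B)
        ≤ finrank K ↥(G ⊓ LinearMap.ker B) :=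
      Submodule.finrank_mono (inf_le_inf_right _ inf_le_left)
  nlinarith

theorem aux_quadratic {K : Type*} [Field K] (a b c : K) (h : a ≠ 0 ∨ c ≠ 0) :
    ∀ᶠ t : K in Filter.cofinite, a + t * b + t * t * c ≠ 0 := by
  set p : Polynomial K := Polynomial.C a + Polynomial.X * Polynomial.C b
    + Polynomial.X ^ 2 * Polynomial.C c with hp
  have hp0 : p ≠ 0 := by
    intro h0
    rcases h with h | h
    · apply h
      have := congrArg (fun q => Polynomial.coeff q 0) h0
      simpa [hp] using this
    · apply h
      have := congrArg (fun q => Polynomial.coeff q 2) h0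
      simpa [hp, Polynomial.coeff_X_pow_mul', Polynomial.coeff_X_mul, Polynomial.coeff_C] using this
  rw [Filter.eventually_cofinite]
  refine (Polynomial.finite_setOfPred_isRoot hp0).subset ?_
  intro t ht
  simp only [Set.mem_ofPred_eq, not_not] at ht ⊢
  rw [Polynomial.IsRoot.def, hp, ← ht]
  simp; ring

theorem aux_exists_max {V : Type*} [Nonempty V] (f : V → ℕ) (N : ℕ) (h : ∀ Y, f Y ≤ N) :
    ∃ Y₀, ∀ Y, f Y ≤ f Y₀ := by
  obtain ⟨m, ⟨Y₀, rfl⟩, hm⟩ := Set.exists_max_image (Set.range f) id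
    ((Set.finite_Iic N).subset (by rintro _ ⟨Y, rfl⟩; exact h Y)) (Set.range_nonempty f)
  exact ⟨Y₀, fun Y => hm _ ⟨Y, rfl⟩⟩

open Module in
/-- Spaces of bilinear forms. -/
theorem aux_bil {K V W : Type*} [Field K] [Infinite K] [AddCommGroup V] [Module K V]
    [FiniteDimensional K V] [AddCommGroup W] [Module K W] [FiniteDimensional K W]
    (B Ω : W →ₗ[K] V →ₗ[K] V →ₗ[K] K) (hΩ : ∀ w Y U, Ω w Y U = B w U Y - B w Y U) (y : ℕ)
    (G : Submodule K W)
    (Ya : V) (hmaxa : ∀ Y, finrank K (G.map (B.flip Y)) ≤ finrank K (G.map (B.flip Ya)))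
    (hy : ∀ Y, finrank K (G.map (Ω.flip Y)) ≤ y) :
    2 * finrank K G ≤ 2 * finrank K ↥(G ⊓ LinearMap.ker B) +
      2 * (finrank K (G.map (B.flip Ya)) * y) +
      finrank K (G.map (B.flip Ya)) * (finrank K (G.map (B.flip Ya)) + 1) := by
  by_cases halt : ∀ w ∈ G, ∀ Y, B w Y Y = 0
  · have := aux_alt B G halt Ya hmaxa
    omega
  push Not at halt
  obtain ⟨w₀, hw₀, Yb, hb⟩ := halt
  obtain ⟨e, heG, hei⟩ := aux_exists_indep G (B.flip Ya)
  have hg1 := aux_indep_generic _ (fun i => B.flip Yb (e i)) (Or.inl hei)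
  have hg2 := aux_quadratic (B w₀ Ya Ya) (B w₀ Ya Yb + B w₀ Yb Ya) (B w₀ Yb Yb) (Or.inr hb)
  obtain ⟨t, ht1, ht2⟩ := (hg1.and hg2).exists
  set Y₀ := Ya + t • Yb with hY₀
  have h1 : finrank K (G.map (B.flip Ya)) ≤ finrank K (G.map (B.flip Y₀)) := by
    have := aux_le_finrank_map G (B.flip Y₀) e heG (by
      convert ht1 using 2
      simp [hY₀])
    simpa using this
  have hmax : ∀ Y, finrank K (G.map (B.flip Y)) ≤ finrank K (G.map (B.flip Y₀)) :=
    fun Y => (hmaxa Y).trans h1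
  have hx : finrank K (G.map (B.flip Ya)) = finrank K (G.map (B.flip Y₀)) :=
    le_antisymm h1 (hmaxa Y₀)
  have hne : B w₀ Y₀ Y₀ ≠ 0 := by
    convert ht2 using 1
    simp [hY₀]; ring
  rw [hx]
  set I := G.map (B.flip Y₀) with hIdef
  have hI' := aux_hyperplane I Y₀ (B w₀ Y₀) ⟨w₀, hw₀, rfl⟩ hne
  set I' := I ⊓ LinearMap.ker (LinearMap.applyₗ (R := K) (M₂ := K) Y₀) with hI'def
  set G₀ := G ⊓ LinearMap.ker (B.flip Y₀) with hG₀
  have hs := aux_finrank_split G (B.flip Y₀)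
  have hs2 := aux_finrank_split G₀ (Ω.flip Y₀)
  have h2 : finrank K (G₀.map (Ω.flip Y₀)) ≤ y :=
    (Submodule.finrank_mono (Submodule.map_mono inf_le_left)).trans (hy Y₀)
  have h3 := aux_chain B Ω hΩ y _ I' (G₀ ⊓ LinearMap.ker (Ω.flip Y₀)) rfl (by
      rintro w ⟨⟨hw, hwf⟩, hwo⟩ Y
      refine ⟨aux_max_rank B.flip G Y₀ hmax w hw hwf Y, ?_⟩
      have e1 : B w Y₀ = 0 := by simpa using hwf
      have e2 : Ω w Y₀ = 0 := by simpa using hwo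
      have e3 := hΩ w Y₀ Y
      rw [e1, e2] at e3
      simpa using e3.symm)
      (fun Y => (Submodule.finrank_mono (Submodule.map_mono (inf_le_left.trans inf_le_left))).trans
        (hy Y))
  have h4 : finrank K ↥(G₀ ⊓ LinearMap.ker (Ω.flip Y₀) ⊓ LinearMap.ker B)
      ≤ finrank K ↥(G ⊓ LinearMap.ker B) :=
    Submodule.finrank_mono (inf_le_inf_right _ (inf_le_left.trans inf_le_left))
  rw [hI']
  nlinarith

open Module in
theorem aux_perp {K V : Type*} [Field K] [AddCommGroup V] [Module K V]
    [FiniteDimensional K V] (Θ : V →ₗ[K] V →ₗ[K] K)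
    (hnd : ∀ z, (∀ a, Θ a z = 0) → z = 0) (A : Submodule K V) :
    ∃ P : Submodule K V, (∀ z, z ∈ P ↔ ∀ a ∈ A, Θ a z = 0) ∧
      finrank K A + finrank K P = finrank K V := by
  let L : V →ₗ[K] Dual K A := A.subtype.dualMap ∘ₗ Θ.flip
  refine ⟨LinearMap.ker L, ?_, ?_⟩
  · intro z
    rw [LinearMap.mem_ker]
    constructor
    · intro h a ha
      exact LinearMap.congr_fun h ⟨a, ha⟩
    · intro h
      refine LinearMap.ext fun a => ?_
      exact h a a.2
  · have hinj : Function.Injective (Θ.flip : V →ₗ[K] Dual K V) := by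
      rw [← LinearMap.ker_eq_bot, LinearMap.ker_eq_bot']
      intro z hz
      exact hnd z (fun a => LinearMap.congr_fun hz a)
    have hsurj : Function.Surjective (Θ.flip : V →ₗ[K] Dual K V) :=
      (LinearMap.injective_iff_surjective_of_finrank_eq_finrank
        (Subspace.dual_finrank_eq (K := K) (V := V)).symm).1 hinj
    have hs2 : Function.Surjective L :=
      (LinearMap.dualMap_surjective_of_injective A.injective_subtype).comp hsurj
    have h := LinearMap.finrank_range_add_finrank_ker L
    rw [LinearMap.range_eq_top.2 hs2, finrank_top, Subspace.dual_finrank_eq] at h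
    exact h

open Module in
theorem aux_main {K V : Type*} [Field K] [CharZero K] [AddCommGroup V] [Module K V]
    [FiniteDimensional K V] (β : V →ₗ[K] V →ₗ[K] V) (Θ : V →ₗ[K] V →ₗ[K] K)
    (hβ : ∀ X Y, β X Y = - β Y X) (hβX : ∀ X, β X X = 0)
    (hnd : ∀ z, (∀ a, Θ a z = 0) → z = 0) (hnd' : ∀ z, (∀ a, Θ z a = 0) → z = 0)
    (hcl : ∀ X Y Z, Θ (β X Y) Z + Θ (β Y Z) X + Θ (β Z X) Y = 0)
    (D : Submodule K V) (hD : D = Submodule.span K {v | ∃ X Y, β X Y = v})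
    (hZ : ∀ z, (∀ Y, β z Y = 0) → z ∈ D) (hne : ∃ X Y, β X Y ≠ 0) (k : ℕ)
    (hk : ∀ X, finrank K ((⊤ : Submodule K V).map (β X)) ≤ k)
    (hk' : ∃ X, finrank K ((⊤ : Submodule K V).map (β X)) = k) :
    2 * finrank K V ≤ k * (k + 5) := by
  -- choice of X
  obtain ⟨X, hXk, Yc, hYc⟩ : ∃ X, finrank K ((⊤ : Submodule K V).map (β X)) = k ∧
      ∃ Y, Θ (β X Y) X ≠ 0 := by
    obtain ⟨Xa, ha⟩ := hk'
    obtain ⟨Xb, Y, hb⟩ : ∃ Xb Y, Θ (β Xb Y) Xb ≠ 0 := by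
      by_contra! hcon
      obtain ⟨X, Y, hXY⟩ := hne
      apply hXY
      apply hnd'
      intro Z
      have h1 : ∀ X Y Z, Θ (β X Y) Z = - Θ (β Z Y) X := by
        intro X Y Z
        have := hcon (X + Z) Y
        simp only [map_add, LinearMap.add_apply, hcon, zero_add, add_zero] at this
        linear_combination this
      have h2 : ∀ X Y Z, Θ (β X Y) Z = - Θ (β Y X) Z := by
        intro X Y Z
        rw [hβ X Y]; simp
      have h3 := hcl X Y Z
      have h4 : (3 : K) * Θ (β X Y) Z = 0 := by
        linear_combination h3 - h2 Y Z X + h1 Z Y X - h1 Z X Y + h2 Y X Z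
      simpa using h4
    have hex := aux_exists_indep ⊤ (β Xa)
    rw [ha] at hex
    obtain ⟨e, heF, hei⟩ := hex
    have hg1 := aux_indep_generic _ (fun i => β Xb (e i)) (Or.inl hei)
    have hg2 := aux_quadratic (Θ (β Xa Y) Xa) (Θ (β Xa Y) Xb + Θ (β Xb Y) Xa) (Θ (β Xb Y) Xb)
      (Or.inr hb)
    obtain ⟨t, ht1, ht2⟩ := (hg1.and hg2).exists
    refine ⟨Xa + t • Xb, le_antisymm (hk _) ?_, Y, ?_⟩
    · have := aux_le_finrank_map ⊤ (β (Xa + t • Xb)) e heF (by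
        convert ht1 using 2
        simp)
      simpa using this
    · convert ht2 using 1
      simp; ring
  -- the forms
  set B : V →ₗ[K] V →ₗ[K] V →ₗ[K] K := β.compr₂ Θ with hB
  have hBa : ∀ W Y U, B W Y U = Θ (β W Y) U := fun W Y U => rfl
  obtain ⟨Ω, hΩ⟩ : ∃ Ω : V →ₗ[K] V →ₗ[K] V →ₗ[K] K,
      ∀ W Y U, Ω W Y U = B W U Y - B W Y U :=
    ⟨LinearMap.mk₂ K (fun W Y => (B W).flip Y - B W Y)
      (fun W W' Y => LinearMap.ext fun U => by simp; ring)
      (fun a W Y => LinearMap.ext fun U => by simp; ring)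
      (fun W Y Y' => LinearMap.ext fun U => by simp; ring)
      (fun a W Y => LinearMap.ext fun U => by simp; ring), fun W Y U => by simp⟩
  have hΩa : ∀ W Y U, Ω W Y U = Θ (β Y U) W := by
    intro W Y U
    rw [hΩ, hBa, hBa, hβ W U]
    have := hcl Y U W
    simp only [map_neg, LinearMap.neg_apply]
    linear_combination -this
  set A := (⊤ : Submodule K V).map (β X) with hA
  obtain ⟨P, hP, hPdim⟩ := aux_perp Θ hnd A
  obtain ⟨PD, hPD, hPDdim⟩ := aux_perp Θ hnd D
  have hAmem : ∀ Y, β X Y ∈ A := fun Y => ⟨Y, trivial, rfl⟩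
  set C := LinearMap.ker (β X) with hC
  have hCdim : k + finrank K C = finrank K V := by
    rw [← hXk, ← LinearMap.finrank_range_add_finrank_ker (β X), hA, Submodule.map_top]
  set F := C ⊓ P with hF
  have hFdim : finrank K V ≤ 2 * k + finrank K F := by
    have h1 := Submodule.finrank_sup_add_finrank_inf_eq C P
    have h2 := Submodule.finrank_le (C ⊔ P)
    rw [← hF] at h1
    omega
  have hmaxr : ∀ w, β X w = 0 → ∀ Y, β Y w ∈ A := fun w hw Y =>
    aux_max_rank β ⊤ X (fun Y => by rw [← hA, hXk]; exact hk Y) w trivial hw Y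
  -- maximal ranks
  obtain ⟨Ya, hYa⟩ := aux_exists_max (fun Y => finrank K (P.map (Ω.flip Y)))
    (finrank K (V →ₗ[K] K)) (fun Y => Submodule.finrank_le _)
  obtain ⟨Yb, hYb⟩ := aux_exists_max (fun Y => finrank K (F.map (B.flip Y)))
    (finrank K (V →ₗ[K] K)) (fun Y => Submodule.finrank_le _)
  have halt := aux_alt Ω P (fun w _ Y => by rw [hΩ, sub_self]) Ya hYa
  have hbil := aux_bil B Ω hΩ _ F Yb hYb (fun Y =>
    (Submodule.finrank_mono (Submodule.map_mono (inf_le_right : F ≤ P))).trans (hYa Y))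
  have h5 : finrank K ↥(P ⊓ LinearMap.ker Ω) ≤ finrank K PD := by
    apply Submodule.finrank_mono
    rintro z ⟨-, hz⟩
    have hz' : Ω z = 0 := hz
    rw [hPD, hD]
    have : Submodule.span K {v | ∃ X Y, β X Y = v} ≤ LinearMap.ker (Θ.flip z) := by
      rw [Submodule.span_le]
      rintro _ ⟨Y, U, rfl⟩
      have h := hΩa z Y U
      rw [hz'] at h
      exact LinearMap.mem_ker.2 h.symm
    intro a ha
    exact LinearMap.mem_ker.1 (this ha)
  have h6 : finrank K ↥(F ⊓ LinearMap.ker B) ≤ finrank K D := by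
    apply Submodule.finrank_mono
    rintro z ⟨-, hz⟩
    have hz' : B z = 0 := hz
    apply hZ
    intro Y
    apply hnd'
    intro U
    rw [← hBa, hz']; rfl
  obtain ⟨q, hq⟩ : ∃ q, q = finrank K (P.map (Ω.flip Ya)) := ⟨_, rfl⟩
  obtain ⟨x, hx⟩ : ∃ x, x = finrank K (F.map (B.flip Yb)) := ⟨_, rfl⟩
  have hexa := aux_exists_indep P (Ω.flip Ya)
  have hexb := aux_exists_indep F (B.flip Yb)
  rw [← hq] at hexa halt hbil
  rw [← hx] at hexb hbil
  -- key inequality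
  have hkey : x + q + 1 ≤ k := by
    obtain ⟨ea, heaF, heai⟩ := hexa
    obtain ⟨eb, hebF, hebi⟩ := hexb
    obtain ⟨t, ht1, ht2⟩ := ((aux_indep_generic _ (fun i => Ω.flip Yb (ea i)) (Or.inl heai)).and
      (aux_indep_generic (fun i => B.flip Ya (eb i)) _ (Or.inr hebi))).exists
    obtain ⟨s, ⟨hs1, hs2⟩, hs3⟩ :=
      (((aux_indep_generic _ (fun i => Ω.flip Yc (ea i)) (Or.inl ht1)).and
      (aux_indep_generic _ (fun i => B.flip Yc (eb i)) (Or.inl ht2))).and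
      (aux_quadratic 0 (Θ (β X (Ya + t • Yb)) X) (Θ (β X Yc) X) (Or.inr hYc))).exists
    obtain ⟨Y, hY⟩ : ∃ Y, Y = Ya + t • Yb + s • Yc := ⟨_, rfl⟩
    have hq1 : q ≤ finrank K (P.map (Ω.flip Y)) := by
      have := aux_le_finrank_map P (Ω.flip Y) ea heaF (by
        convert hs1 using 2
        simp [hY])
      simpa using this
    have hx1 : x ≤ finrank K (F.map (B.flip Y)) := by
      have := aux_le_finrank_map F (B.flip Y) eb hebF (by
        convert hs2 using 2
        simp [hY])
      simpa using this
    have hYX : Θ (β Y X) X ≠ 0 := by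
      intro h0
      apply hs3
      have h1 : Θ (β X Y) X = 0 := by rw [hβ X Y]; simp [h0]
      have h2 : Θ (β X Y) X = Θ (β X (Ya + t • Yb)) X + s * Θ (β X Yc) X := by
        rw [hY]; simp
      rw [h1] at h2
      linear_combination (-s) * h2
    have hRk := hk Y
    rw [Submodule.map_top] at hRk
    set R := LinearMap.range (β Y) with hR
    have hx2 : finrank K (F.map (B.flip Y)) ≤ finrank K (F.map (β Y)) := by
      have h1 : F.map (B.flip Y) ≤ (F.map (β Y)).map Θ := by
        rintro _ ⟨w, hw, rfl⟩
        refine ⟨β Y (-w), ⟨-w, F.neg_mem hw, rfl⟩, ?_⟩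
        refine LinearMap.ext fun U => ?_
        rw [LinearMap.flip_apply, hBa, hβ w Y, map_neg]
      exact (Submodule.finrank_mono h1).trans (Submodule.finrank_map_le _ _)
    have hx3 : F.map (β Y) ≤ (R ⊓ A) ⊓ LinearMap.ker (Θ.flip X) := by
      rintro _ ⟨w, hw, rfl⟩
      have hw1 : β X w = 0 := hw.1
      refine ⟨⟨⟨w, rfl⟩, hmaxr w hw1 Y⟩, LinearMap.mem_ker.2 ?_⟩
      have h1 := hcl Y w X
      have h2 : β w X = 0 := by rw [hβ, hw1, neg_zero]
      have h3 := (hP w).1 hw.2 _ (hAmem Y)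
      rw [h2, h3] at h1
      simpa using h1
    have hx4 := aux_finrank_split (R ⊓ A) (Θ.flip X)
    have hx5 : 1 ≤ finrank K ((R ⊓ A).map (Θ.flip X)) := by
      rw [Nat.one_le_iff_ne_zero]
      intro h
      rw [Submodule.finrank_eq_zero] at h
      have h1 : Θ.flip X (β Y X) ∈ (R ⊓ A).map (Θ.flip X) :=
        ⟨β Y X, ⟨⟨X, rfl⟩, hmaxr X (hβX X) Y⟩, rfl⟩
      rw [h] at h1
      exact hYX ((Submodule.mem_bot K).1 h1)
    have hx6 := Submodule.finrank_mono hx3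
    have hE := aux_finrank_split (A.comap (β Y)) (β Y)
    have hE1 : (A.comap (β Y)).map (β Y) = R ⊓ A := by
      rw [Submodule.map_comap_eq]
    have hE2 : A.comap (β Y) ⊓ LinearMap.ker (β Y) = LinearMap.ker (β Y) := by
      rw [inf_eq_right]
      intro z hz
      have hz' : β Y z = 0 := hz
      rw [Submodule.mem_comap, hz']
      exact A.zero_mem
    rw [hE1, hE2] at hE
    have hE3 := LinearMap.finrank_range_add_finrank_ker (β Y)
    have hE4 := Subspace.finrank_add_finrank_dualAnnihilator_eq (A.comap (β Y))
    have hE5 : finrank K (P.map (Ω.flip Y)) ≤ finrank K (A.comap (β Y)).dualAnnihilator := by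
      apply Submodule.finrank_mono
      rintro _ ⟨z, hz, rfl⟩
      rw [Submodule.mem_dualAnnihilator]
      intro U hU
      rw [LinearMap.flip_apply, hΩa]
      exact (hP z).1 hz _ hU
    rw [← hR] at hE3
    omega
  obtain ⟨m, rfl⟩ := Nat.exists_eq_add_of_le hkey
  nlinarith

theorem aux_bracket_mem {K g : Type*} [Field K] [LieRing g] [LieAlgebra K g] (D : Submodule K g)
    (hD : D = Submodule.span K {v | ∃ X Y : g, ⁅X, Y⁆ = v}) (X Y : g) : ⁅X, Y⁆ ∈ D := by
  rw [hD]
  exact Submodule.subset_span ⟨X, Y, rfl⟩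

theorem aux_center {K g : Type*} [Field K] [LieRing g] [LieAlgebra K g]
    (D : Submodule K g) (hD : D = Submodule.span K {v | ∃ X Y : g, ⁅X, Y⁆ = v})
    (hne : ∃ X Y : g, ⁅X, Y⁆ ≠ 0)
    (hind : ¬ ∃ I J : LieIdeal K g, I ≠ ⊥ ∧ J ≠ ⊥ ∧ I ⊓ J = ⊥ ∧ I ⊔ J = ⊤)
    (z : g) (hz : ∀ Y : g, ⁅z, Y⁆ = 0) : z ∈ D := by
  by_contra hzD
  obtain ⟨f, hfz, hfD⟩ := Submodule.exists_le_ker_of_notMem hzD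
  have hbr := aux_bracket_mem D hD
  apply hind
  let I : LieIdeal K g :=
    { (Submodule.span K {z} : Submodule K g) with
      lie_mem := by
        intro x m hm
        obtain ⟨a, rfl⟩ := Submodule.mem_span_singleton.1 hm
        have h : ⁅x, a • z⁆ = 0 := by
          rw [lie_smul, ← lie_skew, hz]; simp
        rw [h]
        exact Submodule.zero_mem _ }
  let J : LieIdeal K g :=
    { (LinearMap.ker f : Submodule K g) with
      lie_mem := by
        intro x m _
        exact hfD (hbr x m) }
  have hI : ∀ w, w ∈ I ↔ ∃ a : K, a • z = w := fun w => Submodule.mem_span_singleton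
  have hJ : ∀ w, w ∈ J ↔ f w = 0 := fun w => LinearMap.mem_ker
  have hz0 : z ≠ 0 := by
    rintro rfl; exact hzD D.zero_mem
  refine ⟨I, J, ?_, ?_, ?_, ?_⟩
  · intro h
    have : z ∈ I := (hI z).2 ⟨1, one_smul _ _⟩
    rw [h] at this
    exact hz0 ((LieSubmodule.mem_bot _).1 this)
  · intro h
    obtain ⟨X, Y, hXY⟩ := hne
    have : ⁅X, Y⁆ ∈ J := (hJ _).2 (hfD (hbr X Y))
    rw [h] at this
    exact hXY ((LieSubmodule.mem_bot _).1 this)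
  · rw [eq_bot_iff]
    intro w hw
    rw [LieSubmodule.mem_inf] at hw
    obtain ⟨a, rfl⟩ := (hI w).1 hw.1
    have h := (hJ _).1 hw.2
    rw [map_smul, smul_eq_mul] at h
    have : a = 0 := by simpa [hfz] using h
    simp [this]
  · rw [eq_top_iff]
    intro w _
    rw [LieSubmodule.mem_sup]
    refine ⟨(f w / f z) • z, (hI _).2 ⟨_, rfl⟩, w - (f w / f z) • z, (hJ _).2 ?_, by simp⟩
    simp [hfz]

/-- If `g` is a 2-step nilpotent symplectic Lie algebra over `K` with characteristic
sequence `(2,…,2,1,…,1)` containing exactly `k` twos, and `g` is indecomposable (not the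
direct sum of two nonzero ideals), then `dim g ≤ k(k+5)/2`. -/
theorem finrank_le_of_charSeqTwos_symplectic_indecomposable
    (K : Type*) [RCLike K] (g : Type*) [LieRing g] [LieAlgebra K g] [FiniteDimensional K g]
    (k : ℕ) (h2 : IsTwoStepNilpotent g) (hc : HasCharSeqTwos K g k)
    (θ : g → g → K) (hθ : IsSymplecticForm K g θ)
    (hind : ¬ ∃ I J : LieIdeal K g, I ≠ ⊥ ∧ J ≠ ⊥ ∧ I ⊓ J = ⊥ ∧ I ⊔ J = ⊤) :
    Module.finrank K g ≤ k * (k + 5) / 2 := by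
  obtain ⟨hnil, hne⟩ := h2
  obtain ⟨hl, hr, halt, hnd, hcl⟩ := hθ
  obtain ⟨hk, X₀, _, hX₀⟩ := hc
  have l0 : ∀ Z, θ 0 Z = 0 := fun Z => by simpa using hl 1 0 0 Z
  have r0 : ∀ Z, θ Z 0 = 0 := fun Z => by simpa using hr 1 Z 0 0
  let Θ : g →ₗ[K] g →ₗ[K] K := LinearMap.mk₂ K θ
    (fun X Y Z => by simpa using hl 1 X Y Z)
    (fun a X Z => by simpa [l0] using hl a X 0 Z)
    (fun X Y Z => by simpa using hr 1 X Y Z)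
    (fun a X Y => by simpa [r0] using hr a X Y 0)
  have hΘ : ∀ X Y, Θ X Y = θ X Y := fun X Y => rfl
  have hskew : ∀ X Y, Θ X Y = - Θ Y X := by
    intro X Y
    have h : Θ (X + Y) (X + Y) = 0 := halt _
    have h1 : Θ X X = 0 := halt X
    have h3 : Θ Y Y = 0 := halt Y
    simp only [map_add, LinearMap.add_apply, h1, h3, zero_add, add_zero] at h
    linear_combination h
  let β : g →ₗ[K] g →ₗ[K] g := LinearMap.mk₂ K (fun X Y => ⁅X, Y⁆)
    (fun X X1 Y => add_lie X X1 Y) (fun a X Y => smul_lie a X Y)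
    (fun X Y Y1 => lie_add X Y Y1) (fun a X Y => lie_smul a X Y)
  have hβ : ∀ X Y, β X Y = ⁅X, Y⁆ := fun X Y => rfl
  have hβad : ∀ X, β X = LieAlgebra.ad K g X := fun X => rfl
  have hle : (((LieAlgebra.derivedSeries K g 1 : LieIdeal K g) : LieSubmodule K g g).toSubmodule)
      = Submodule.span K {v | ∃ X Y : g, ⁅X, Y⁆ = v} := by
    rw [LieAlgebra.derivedSeries_def, LieAlgebra.derivedSeriesOfIdeal_succ,
      LieAlgebra.derivedSeriesOfIdeal_zero, LieSubmodule.lieIdeal_oper_eq_linear_span']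
    simp
  have hall : ∀ X, Module.finrank K ((⊤ : Submodule K g).map (β X)) ≤ k := by
    intro X
    rw [Submodule.map_top]
    by_cases hX : X ∈ LieAlgebra.derivedSeries K g 1
    · have hX' : X ∈ Submodule.span K {v | ∃ X Y : g, ⁅X, Y⁆ = v} := by
        rw [← hle]; exact hX
      have hker : Submodule.span K {v | ∃ X Y : g, ⁅X, Y⁆ = v} ≤ LinearMap.ker β := by
        rw [Submodule.span_le]
        rintro _ ⟨U, W, rfl⟩
        refine LinearMap.mem_ker.2 (LinearMap.ext fun Z => ?_)
        exact hnil U W Z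
      have h0 : β X = 0 := LinearMap.mem_ker.1 (hker hX')
      rw [h0, LinearMap.range_zero, finrank_bot]
      exact Nat.zero_le k
    · exact hk X hX
  have hmain := aux_main β Θ (fun X Y => by rw [hβ, hβ, lie_skew])
    (fun X => by rw [hβ, lie_self])
    (fun z h => hnd z (fun Y => by rw [← hΘ, hskew, h, neg_zero]))
    (fun z h => hnd z h) (fun X Y Z => hcl X Y Z) _ rfl
    (fun z hz => aux_center _ rfl hne hind z hz) hne k hall
    ⟨X₀, by rw [Submodule.map_top, hβad, hX₀]⟩
  rw [Nat.le_div_iff_mul_le (by norm_num)]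
  omega
end
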